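/- arXiv:2406.18383 — 5 statements merged into one kernel-verified Lean document; each statement's English description precedes it below -/
import Mathlib

section
/- For every x ∈ B^ℕ, the limit lim_{ℓ→∞} limsup_{n→∞} Hc^{n,ℓ}(x) exists and equals h̄(x). -/
open Filter Topology

/-- The factor of length `len` of the sequence `x` starting at position `i`. -/
def factor (x : ℕ → Bool) (i len : ℕ) : List Bool :=
  List.ofFn (fun j : Fin len => x (i + j))

/-- Number of (possibly overlapping) occurrences of the word `u`
in the prefix `x[0:n)` of the sequence `x`. -/
def occ (x : ℕ → Bool) (n : ℕ) (u : List Bool) : ℕ :=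
  ((Finset.range (n + 1 - u.length)).filter (fun i => factor x i u.length = u)).card

/-- Non-aligned `ℓ`-block entropy of the prefix `x[0:n)`
(logs are base 2, with the convention `0 · log 0 = 0`). -/
noncomputable def hBlock (ℓ : ℕ) (x : ℕ → Bool) (n : ℕ) : ℝ :=
  -(1 / (ℓ : ℝ)) * ∑ u : Fin ℓ → Bool,
    ((occ x n (List.ofFn u) : ℝ) / ((n : ℝ) - ℓ + 1)) *
      Real.logb 2 ((occ x n (List.ofFn u) : ℝ) / ((n : ℝ) - ℓ + 1))

/-- `h̲(x) = lim_{ℓ→∞} liminf_{n→∞} h_ℓ(x[0:n))` (the limit in `ℓ` exists). -/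
noncomputable def hLow (x : ℕ → Bool) : ℝ :=
  atTop.liminf fun ℓ => atTop.liminf fun n => hBlock ℓ x n

/-- `h̄(x) = lim_{ℓ→∞} limsup_{n→∞} h_ℓ(x[0:n))` (the limit in `ℓ` exists). -/
noncomputable def hUp (x : ℕ → Bool) : ℝ :=
  atTop.limsup fun ℓ => atTop.limsup fun n => hBlock ℓ x n

/-- `γ_ℓ(x[0:n))`: normalized minimal number of prediction errors when predicting
`x[i]` from the preceding `ℓ` symbols `x[i-ℓ:i)`, for `i ∈ {ℓ,…,n-1}`. -/
noncomputable def gammaWord (ℓ : ℕ) (x : ℕ → Bool) (n : ℕ) : ℝ :=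
  (1 / ((n : ℝ) - ℓ)) *
    ((Finset.univ : Finset ((Fin ℓ → Bool) → Bool)).inf' Finset.univ_nonempty
      (fun f => ((((Finset.Ico ℓ n).filter
        (fun i => x i ≠ f (fun j => x (i - ℓ + j)))).card : ℝ))))

/-- `β_ℓ(x[0:n))`: normalized minimal number of prediction errors when predicting
`x[i]` from the following `ℓ` symbols `x[i+1:i+ℓ+1)`, for `i ∈ {0,…,n-ℓ-1}`. -/
noncomputable def betaWord (ℓ : ℕ) (x : ℕ → Bool) (n : ℕ) : ℝ :=
  (1 / ((n : ℝ) - ℓ)) *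
    ((Finset.univ : Finset ((Fin ℓ → Bool) → Bool)).inf' Finset.univ_nonempty
      (fun f => ((((Finset.range (n - ℓ)).filter
        (fun i => x i ≠ f (fun j => x (i + 1 + j)))).card : ℝ))))

/-- `γ̲(x) = lim_{ℓ→∞} liminf_{n→∞} γ_ℓ(x[0:n))` (the limit in `ℓ` exists, by monotonicity). -/
noncomputable def gammaLow (x : ℕ → Bool) : ℝ :=
  atTop.liminf fun ℓ => atTop.liminf fun n => gammaWord ℓ x n

/-- `γ̄(x) = lim_{ℓ→∞} limsup_{n→∞} γ_ℓ(x[0:n))` (the limit in `ℓ` exists, by monotonicity). -/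
noncomputable def gammaUp (x : ℕ → Bool) : ℝ :=
  atTop.limsup fun ℓ => atTop.limsup fun n => gammaWord ℓ x n

/-- `β̲(x) = lim_{ℓ→∞} liminf_{n→∞} β_ℓ(x[0:n))` (the limit in `ℓ` exists, by monotonicity). -/
noncomputable def betaLow (x : ℕ → Bool) : ℝ :=
  atTop.liminf fun ℓ => atTop.liminf fun n => betaWord ℓ x n

/-- `β̄(x) = lim_{ℓ→∞} limsup_{n→∞} β_ℓ(x[0:n))` (the limit in `ℓ` exists, by monotonicity). -/
noncomputable def betaUp (x : ℕ → Bool) : ℝ :=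
  atTop.limsup fun ℓ => atTop.limsup fun n => betaWord ℓ x n

/-- Binary Shannon entropy function `H(α) = -α log α - (1-α) log (1-α)` (base-2 logs). -/
noncomputable def binEntropy (a : ℝ) : ℝ :=
  -(a * Real.logb 2 a) - (1 - a) * Real.logb 2 (1 - a)

/-- Conditional block entropy `Hc^{n,ℓ}(x)`:
`-Σ_{ā ∈ B^ℓ, a ∈ B, p(ā·a) > 0} p(ā·a) · log (p(ā·a)/p(ā))`, where
`p(ā) = occ(x[0:n-1), ā)/(n-ℓ)` and `p(ā·a) = occ(x[0:n), ā·a)/(n-ℓ)`. -/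
noncomputable def condEntropy (ℓ : ℕ) (x : ℕ → Bool) (n : ℕ) : ℝ :=
  -∑ u : Fin ℓ → Bool, ∑ a : Bool,
    (if 0 < ((occ x n (List.ofFn u ++ [a]) : ℝ) / ((n : ℝ) - ℓ)) then
      ((occ x n (List.ofFn u ++ [a]) : ℝ) / ((n : ℝ) - ℓ)) *
        Real.logb 2 (((occ x n (List.ofFn u ++ [a]) : ℝ) / ((n : ℝ) - ℓ)) /
          ((occ x (n - 1) (List.ofFn u) : ℝ) / ((n : ℝ) - ℓ)))
    else 0)

/-- The real number in `[0,1]` denoted by the binary sequence `x`. -/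
noncomputable def val (x : ℕ → Bool) : ℝ :=
  ∑' n : ℕ, (if x n then (1 : ℝ) else 0) / 2 ^ (n + 1)

/-- Real-valued count of windows of length `ℓ` starting before `m` that equal `u`. -/
noncomputable def cntR (x : ℕ → Bool) (m ℓ : ℕ) (u : Fin ℓ → Bool) : ℝ :=
  ∑ i ∈ Finset.range m, if (fun j : Fin ℓ => x (i + j)) = u then (1 : ℝ) else 0

/-- Unnormalized (natural log) entropy of windows of length `ℓ` starting before `m+1`. -/
noncomputable def entF (x : ℕ → Bool) (ℓ m : ℕ) : ℝ :=
  ∑ u : Fin ℓ → Bool, Real.negMulLog (cntR x (m + 1) ℓ u / ((m : ℝ) + 1))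

lemma occ_eq_cntR (x : ℕ → Bool) (n m ℓ : ℕ) (u : Fin ℓ → Bool) (h : n + 1 - ℓ = m) :
    (occ x n (List.ofFn u) : ℝ) = cntR x m ℓ u := by
  unfold occ cntR factor
  rw [Finset.card_filter]
  simp only [List.length_ofFn, h, List.ofFn_injective.eq_iff]
  push_cast
  rfl

lemma cntR_nonneg (x : ℕ → Bool) (m ℓ : ℕ) (u : Fin ℓ → Bool) : 0 ≤ cntR x m ℓ u := by
  unfold cntR
  exact Finset.sum_nonneg fun i _ => by split_ifs <;> norm_num

lemma cntR_le (x : ℕ → Bool) (m ℓ : ℕ) (u : Fin ℓ → Bool) : cntR x m ℓ u ≤ m := by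
  unfold cntR
  calc _ ≤ ∑ i ∈ Finset.range m, (1 : ℝ) :=
        Finset.sum_le_sum fun i _ => by split_ifs <;> norm_num
    _ = m := by simp

lemma cntR_snoc (x : ℕ → Bool) (m ℓ : ℕ) (u : Fin ℓ → Bool) :
    ∑ a : Bool, cntR x m (ℓ + 1) (Fin.snoc (α := fun _ => Bool) u a) = cntR x m ℓ u := by
  unfold cntR
  rw [Finset.sum_comm]
  refine Finset.sum_congr rfl fun i _ => ?_
  have hw : (fun j : Fin (ℓ + 1) => x (i + j)) =
      Fin.snoc (α := fun _ => Bool) (fun j : Fin ℓ => x (i + j)) (x (i + ℓ)) := by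
    funext j
    refine Fin.lastCases ?_ (fun j => ?_) j <;> simp
  simp only [hw, Fin.snoc_inj]
  by_cases h : (fun j : Fin ℓ => x (i + j)) = u <;> simp [h]

lemma cntR_cons (x : ℕ → Bool) (m ℓ : ℕ) (u : Fin ℓ → Bool) :
    ∑ a : Bool, cntR x m (ℓ + 1) (Fin.cons (α := fun _ => Bool) a u) =
      cntR (fun i => x (i + 1)) m ℓ u := by
  unfold cntR
  rw [Finset.sum_comm]
  refine Finset.sum_congr rfl fun i _ => ?_
  have hw : (fun j : Fin (ℓ + 1) => x (i + j)) =
      Fin.cons (α := fun _ => Bool) (x i) (fun j : Fin ℓ => x (i + j + 1)) := by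
    funext j
    refine Fin.cases ?_ (fun j => ?_) j <;> simp [add_assoc]
  simp only [hw, Fin.cons_inj]
  by_cases h : (fun j : Fin ℓ => x (i + j + 1)) = u <;> simp [h]

lemma cntR_shift (x : ℕ → Bool) (m ℓ : ℕ) (u : Fin ℓ → Bool) :
    |cntR (fun i => x (i + 1)) m ℓ u - cntR x m ℓ u| ≤ 1 := by
  have h1 := Finset.sum_range_succ
    (fun i => if (fun j : Fin ℓ => x (i + j)) = u then (1 : ℝ) else 0) m
  have h2 := Finset.sum_range_succ'
    (fun i => if (fun j : Fin ℓ => x (i + j)) = u then (1 : ℝ) else 0) m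
  have h3 : cntR (fun i => x (i + 1)) m ℓ u = ∑ i ∈ Finset.range m,
      if (fun j : Fin ℓ => x (i + 1 + j)) = u then (1 : ℝ) else 0 := by
    unfold cntR
    simp only [add_right_comm]
  rw [h3]
  unfold cntR
  rw [h1] at h2
  rw [abs_le]
  constructor <;> split_ifs at h2 <;> linarith

lemma sum_snoc (ℓ : ℕ) (f : (Fin (ℓ + 1) → Bool) → ℝ) :
    ∑ w, f w = ∑ u : Fin ℓ → Bool, ∑ a : Bool, f (Fin.snoc (α := fun _ => Bool) u a) := by
  rw [← (Fin.snocEquiv (fun _ : Fin (ℓ + 1) => Bool)).sum_comp, Fintype.sum_prod_type,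
    Finset.sum_comm]
  rfl

lemma sum_cons (ℓ : ℕ) (f : (Fin (ℓ + 1) → Bool) → ℝ) :
    ∑ w, f w = ∑ u : Fin ℓ → Bool, ∑ a : Bool, f (Fin.cons (α := fun _ => Bool) a u) := by
  rw [← (Fin.consEquiv (fun _ : Fin (ℓ + 1) => Bool)).sum_comp, Fintype.sum_prod_type,
    Finset.sum_comm]
  rfl

lemma hBlock_eq (x : ℕ → Bool) (ℓ m : ℕ) :
    hBlock ℓ x (m + ℓ) = entF x ℓ m / (ℓ * Real.log 2) := by
  unfold hBlock entF
  have : ∀ u : Fin ℓ → Bool, (occ x (m + ℓ) (List.ofFn u) : ℝ) = cntR x (m + 1) ℓ u :=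
    fun u => occ_eq_cntR x _ _ _ u (by omega)
  simp only [this]
  rw [Finset.mul_sum, Finset.sum_div]
  refine Finset.sum_congr rfl fun u _ => ?_
  have e : ((m + ℓ : ℕ) : ℝ) - ℓ + 1 = m + 1 := by push_cast; ring
  rw [e, Real.negMulLog, Real.logb, div_mul_eq_div_div]
  ring

lemma cond_term (p q : ℝ) (hp : 0 ≤ p) (hpq : p ≤ q) :
    (if 0 < p then p * Real.logb 2 (p / q) else 0) =
      (p * Real.log p - p * Real.log q) / Real.log 2 := by
  split_ifs with h
  · rw [Real.logb, Real.log_div h.ne' (by linarith)]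
    ring
  · have : p = 0 := le_antisymm (not_lt.1 h) hp
    simp [this]

lemma condEntropy_eq (x : ℕ → Bool) (ℓ m : ℕ) :
    condEntropy ℓ x (m + (ℓ + 1)) = (entF x (ℓ + 1) m - entF x ℓ m) / Real.log 2 := by
  unfold condEntropy entF
  have h1 : ∀ u : Fin ℓ → Bool,
      (occ x (m + (ℓ + 1) - 1) (List.ofFn u) : ℝ) = cntR x (m + 1) ℓ u :=
    fun u => occ_eq_cntR x _ _ _ u (by omega)
  have h2 : ∀ (u : Fin ℓ → Bool) (a : Bool),
      (occ x (m + (ℓ + 1)) (List.ofFn u ++ [a]) : ℝ) =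
        cntR x (m + 1) (ℓ + 1) (Fin.snoc (α := fun _ => Bool) u a) := by
    intro u a
    rw [← occ_eq_cntR x (m + (ℓ + 1)) _ _ _ (by omega)]
    congr 2
    rw [List.ofFn_succ']
    simp
  have e : ((m + (ℓ + 1) : ℕ) : ℝ) - ℓ = m + 1 := by push_cast; ring
  simp only [h1, h2, e]
  rw [sum_snoc, ← Finset.sum_sub_distrib, Finset.sum_div, ← Finset.sum_neg_distrib]
  refine Finset.sum_congr rfl fun u _ => ?_
  have hs := cntR_snoc x (m + 1) ℓ u
  have n0 := cntR_nonneg x (m + 1) (ℓ + 1) (Fin.snoc (α := fun _ => Bool) u true)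
  have n1 := cntR_nonneg x (m + 1) (ℓ + 1) (Fin.snoc (α := fun _ => Bool) u false)
  rw [Fintype.sum_bool] at hs
  have hm : (0 : ℝ) < m + 1 := by positivity
  rw [Fintype.sum_bool, Fintype.sum_bool, cond_term _ _ (by positivity)
    (by gcongr; linarith), cond_term _ _ (by positivity) (by gcongr; linarith)]
  unfold Real.negMulLog
  rw [← hs]
  ring

lemma ssa_term (r R S T : ℝ) (hr : 0 ≤ r) (hR : r ≤ R) (hS : r ≤ S) (hT : R ≤ T) :
    r * (Real.log R + Real.log S - Real.log r - Real.log T) ≤ R * S / T - r := by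
  rcases hr.eq_or_lt with h | h
  · subst h
    have : 0 ≤ R * S / T := div_nonneg (mul_nonneg hR hS) (hR.trans hT)
    simpa using this
  · have hR0 : 0 < R := by linarith
    have hS0 : 0 < S := by linarith
    have hT0 : 0 < T := by linarith
    have := Real.log_le_sub_one_of_pos (x := R * S / (r * T)) (by positivity)
    rw [Real.log_div (by positivity) (by positivity), Real.log_mul hR0.ne' hS0.ne',
      Real.log_mul h.ne' hT0.ne'] at this
    have h2 := mul_le_mul_of_nonneg_left this hr
    have h3 : r * (R * S / (r * T) - 1) = R * S / T - r := by field_simp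
    linarith

lemma ssa (a b c d : ℝ) (ha : 0 ≤ a) (hb : 0 ≤ b) (hc : 0 ≤ c) (hd : 0 ≤ d) :
    Real.negMulLog a + Real.negMulLog b + Real.negMulLog c + Real.negMulLog d
      - (Real.negMulLog (a + b) + Real.negMulLog (c + d)) ≤
    Real.negMulLog (a + c) + Real.negMulLog (b + d) - Real.negMulLog (a + c + (b + d)) := by
  rw [show a + c + (b + d) = a + b + c + d by ring]
  have h1 := ssa_term a (a + b) (a + c) (a + b + c + d) ha (by linarith) (by linarith) (by linarith)
  have h2 := ssa_term b (a + b) (b + d) (a + b + c + d) hb (by linarith) (by linarith) (by linarith)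
  have h3 := ssa_term c (c + d) (a + c) (a + b + c + d) hc (by linarith) (by linarith) (by linarith)
  have h4 := ssa_term d (c + d) (b + d) (a + b + c + d) hd (by linarith) (by linarith) (by linarith)
  have h5 : (a + b) * (a + c) / (a + b + c + d) + (a + b) * (b + d) / (a + b + c + d)
      + (c + d) * (a + c) / (a + b + c + d) + (c + d) * (b + d) / (a + b + c + d)
      = a + b + c + d := by
    rcases eq_or_ne (a + b + c + d) 0 with h | h
    · simp [h]
    · field_simp; ring
  unfold Real.negMulLog
  nlinarith

/-- Strong subadditivity. -/
lemma entF_ssa (x : ℕ → Bool) (ℓ m : ℕ) :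
    entF x (ℓ + 2) m - entF x (ℓ + 1) m ≤
      entF (fun i => x (i + 1)) (ℓ + 1) m - entF (fun i => x (i + 1)) ℓ m := by
  unfold entF
  rw [sum_cons (ℓ + 1), sum_snoc ℓ, sum_cons ℓ, sum_snoc ℓ, ← Finset.sum_sub_distrib,
    ← Finset.sum_sub_distrib]
  refine Finset.sum_le_sum fun v _ => ?_
  have hm : (0 : ℝ) < m + 1 := by positivity
  have hc : ∀ b, cntR (fun i => x (i + 1)) (m + 1) (ℓ + 1) (Fin.snoc (α := fun _ => Bool) v b) =
      cntR x (m + 1) (ℓ + 2) (Fin.cons (α := fun _ => Bool) true (Fin.snoc (α := fun _ => Bool) v b)) +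
      cntR x (m + 1) (ℓ + 2) (Fin.cons (α := fun _ => Bool) false (Fin.snoc (α := fun _ => Bool) v b)) := by
    intro b
    rw [← cntR_cons, Fintype.sum_bool]
  have hr : ∀ a, cntR x (m + 1) (ℓ + 1) (Fin.cons (α := fun _ => Bool) a v) =
      cntR x (m + 1) (ℓ + 2) (Fin.cons (α := fun _ => Bool) a (Fin.snoc (α := fun _ => Bool) v true)) +
      cntR x (m + 1) (ℓ + 2) (Fin.cons (α := fun _ => Bool) a (Fin.snoc (α := fun _ => Bool) v false)) := by
    intro a
    rw [← cntR_snoc, Fintype.sum_bool, Fin.cons_snoc_eq_snoc_cons, Fin.cons_snoc_eq_snoc_cons]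
  have ht := cntR_snoc (fun i => x (i + 1)) (m + 1) ℓ v
  rw [Fintype.sum_bool] at ht
  simp only [Fintype.sum_bool]
  rw [← ht, hc, hc, hr, hr]
  have n := cntR_nonneg x (m + 1) (ℓ + 2)
  have := ssa _ _ _ _
    (div_nonneg (n (Fin.cons (α := fun _ => Bool) true (Fin.snoc (α := fun _ => Bool) v true))) hm.le)
    (div_nonneg (n (Fin.cons (α := fun _ => Bool) true (Fin.snoc (α := fun _ => Bool) v false))) hm.le)
    (div_nonneg (n (Fin.cons (α := fun _ => Bool) false (Fin.snoc (α := fun _ => Bool) v true))) hm.le)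
    (div_nonneg (n (Fin.cons (α := fun _ => Bool) false (Fin.snoc (α := fun _ => Bool) v false))) hm.le)
  simp only [← add_div] at this
  linarith

lemma entF_shift (x : ℕ → Bool) (ℓ : ℕ) :
    Tendsto (fun m => entF (fun i => x (i + 1)) ℓ m - entF x ℓ m) atTop (𝓝 0) := by
  unfold entF
  simp only [← Finset.sum_sub_distrib]
  rw [show (0 : ℝ) = ∑ u : Fin ℓ → Bool, 0 by simp]
  refine tendsto_finsetSum _ fun u _ => ?_
  have huc : UniformContinuousOn Real.negMulLog (Set.Icc 0 1) :=
    isCompact_Icc.uniformContinuousOn_of_continuous Real.continuous_negMulLog.continuousOn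
  rw [Metric.uniformContinuousOn_iff] at huc
  rw [Metric.tendsto_atTop]
  intro ε hε
  obtain ⟨δ, hδ, h⟩ := huc ε hε
  obtain ⟨N, hN⟩ := exists_nat_one_div_lt hδ
  refine ⟨N, fun m hm => ?_⟩
  have hm0 : (0 : ℝ) < m + 1 := by positivity
  have mem : ∀ y : ℕ → Bool, cntR y (m + 1) ℓ u / ((m : ℝ) + 1) ∈ Set.Icc (0 : ℝ) 1 := by
    intro y
    refine ⟨div_nonneg (cntR_nonneg _ _ _ _) hm0.le, ?_⟩
    rw [div_le_one hm0]
    simpa using cntR_le y (m + 1) ℓ u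
  have := h _ (mem fun i => x (i + 1)) _ (mem x) (by
    rw [Real.dist_eq, ← sub_div, abs_div, abs_of_pos hm0]
    refine lt_of_le_of_lt ?_ hN
    have := cntR_shift x (m + 1) ℓ u
    have hm' : (N : ℝ) ≤ m := by exact_mod_cast hm
    gcongr)
  rw [Real.dist_eq] at this
  simpa [Real.dist_eq] using this

lemma entF_nonneg (x : ℕ → Bool) (ℓ m : ℕ) : 0 ≤ entF x ℓ m := by
  unfold entF
  refine Finset.sum_nonneg fun u _ => ?_
  have hm0 : (0 : ℝ) < m + 1 := by positivity
  refine Real.negMulLog_nonneg (div_nonneg (cntR_nonneg _ _ _ _) hm0.le) ?_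
  rw [div_le_one hm0]
  simpa using cntR_le x (m + 1) ℓ u

lemma entF_le (x : ℕ → Bool) (ℓ m : ℕ) : entF x ℓ m ≤ 2 ^ ℓ := by
  unfold entF
  calc _ ≤ ∑ u : Fin ℓ → Bool, (1 : ℝ) := by
        refine Finset.sum_le_sum fun u _ => ?_
        have hm0 : (0 : ℝ) < m + 1 := by positivity
        have h0 : 0 ≤ cntR x (m + 1) ℓ u / ((m : ℝ) + 1) :=
          div_nonneg (cntR_nonneg _ _ _ _) hm0.le
        have := Real.negMulLog_le_one_sub_self h0
        linarith
    _ = 2 ^ ℓ := by simp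

lemma entF_zero (x : ℕ → Bool) (m : ℕ) : entF x 0 m = 0 := by
  have hm0 : (m : ℝ) + 1 ≠ 0 := by positivity
  have h : ∀ u, cntR x (m + 1) 0 u = m + 1 := by
    intro u
    unfold cntR
    simp [Subsingleton.elim _ u]
  unfold entF
  simp [h, hm0]

lemma entF_mono (x : ℕ → Bool) (ℓ m : ℕ) : entF x ℓ m ≤ entF x (ℓ + 1) m := by
  unfold entF
  rw [sum_snoc]
  refine Finset.sum_le_sum fun u _ => ?_
  have hm0 : (0 : ℝ) < m + 1 := by positivity
  rw [← cntR_snoc, Fintype.sum_bool, Fintype.sum_bool, add_div]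
  have key : ∀ a b : ℝ, 0 ≤ a → 0 ≤ b → a * Real.log a ≤ a * Real.log (a + b) := by
    intro a b ha hb
    rcases ha.eq_or_lt with h | h
    · simp [← h]
    · exact mul_le_mul_of_nonneg_left (Real.log_le_log h (by linarith)) ha
  have h1 := div_nonneg (cntR_nonneg x (m + 1) (ℓ + 1) (Fin.snoc (α := fun _ => Bool) u true)) hm0.le
  have h2 := div_nonneg (cntR_nonneg x (m + 1) (ℓ + 1) (Fin.snoc (α := fun _ => Bool) u false)) hm0.le
  have k1 := key _ _ h1 h2
  have k2 := key _ _ h2 h1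
  rw [add_comm (cntR x (m + 1) (ℓ + 1) (Fin.snoc u false) / ((m : ℝ) + 1))
    (cntR x (m + 1) (ℓ + 1) (Fin.snoc u true) / ((m : ℝ) + 1))] at k2
  unfold Real.negMulLog
  linarith

/-- Abstract part. -/
lemma abstract_limit (F : ℕ → ℕ → ℝ) (F0 : ∀ m, F 0 m = 0) (Fnn : ∀ ℓ m, 0 ≤ F ℓ m)
    (B : ℕ → ℝ) (FB : ∀ ℓ m, F ℓ m ≤ B ℓ) (Fm : ∀ ℓ m, F ℓ m ≤ F (ℓ + 1) m)
    (E : ∀ ℓ, ∀ ε > 0, ∀ᶠ m in atTop, F (ℓ + 2) m - F (ℓ + 1) m ≤ F (ℓ + 1) m - F ℓ m + ε) :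
    Tendsto (fun ℓ => atTop.limsup fun m => F (ℓ + 1) m - F ℓ m) atTop
      (𝓝 (atTop.limsup fun ℓ : ℕ => atTop.limsup fun m => F ℓ m / (ℓ : ℝ))) := by
  have bd1 : ∀ ℓ, IsBoundedUnder (· ≤ ·) atTop (fun m => F (ℓ + 1) m - F ℓ m) := fun ℓ =>
    isBoundedUnder_of ⟨B (ℓ + 1), fun m => by linarith [FB (ℓ + 1) m, Fnn ℓ m]⟩
  have bd2 : ∀ ℓ, IsCoboundedUnder (· ≤ ·) atTop (fun m => F (ℓ + 1) m - F ℓ m) := fun ℓ =>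
    (isBoundedUnder_of (r := (· ≥ ·)) ⟨0, fun m => by
      show _ ≥ _; linarith [Fm ℓ m]⟩).isCoboundedUnder_le
  have bd3 : ∀ ℓ : ℕ, IsBoundedUnder (· ≤ ·) atTop (fun m => F ℓ m / (ℓ : ℝ)) := fun ℓ =>
    isBoundedUnder_of ⟨B ℓ / ℓ, fun m => by
      have := FB ℓ m
      gcongr⟩
  have bd4 : ∀ ℓ : ℕ, IsCoboundedUnder (· ≤ ·) atTop (fun m => F ℓ m / (ℓ : ℝ)) := fun ℓ =>
    (isBoundedUnder_of (r := (· ≥ ·)) ⟨0, fun m => by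
      show _ ≥ _; exact div_nonneg (Fnn ℓ m) (Nat.cast_nonneg _)⟩).isCoboundedUnder_le
  set C : ℕ → ℝ := fun ℓ => atTop.limsup fun m => F (ℓ + 1) m - F ℓ m with hC
  set D : ℕ → ℝ := fun ℓ => atTop.limsup fun m => F ℓ m / (ℓ : ℝ) with hD
  have Cev : ∀ ℓ, ∀ ε > 0, ∀ᶠ m in atTop, F (ℓ + 1) m - F ℓ m < C ℓ + ε := fun ℓ ε hε =>
    eventually_lt_of_limsup_lt (show C ℓ < C ℓ + ε by linarith) (bd1 ℓ)
  have Dev : ∀ ℓ : ℕ, ∀ ε > 0, ∀ᶠ m in atTop, F ℓ m / (ℓ : ℝ) < D ℓ + ε := fun ℓ ε hε =>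
    eventually_lt_of_limsup_lt (show D ℓ < D ℓ + ε by linarith) (bd3 ℓ)
  have Cle : ∀ ℓ a, (∀ᶠ m in atTop, F (ℓ + 1) m - F ℓ m ≤ a) → C ℓ ≤ a := fun ℓ a h =>
    limsup_le_of_le (bd2 ℓ) h
  have Dle : ∀ (ℓ : ℕ) a, (∀ᶠ m in atTop, F ℓ m / (ℓ : ℝ) ≤ a) → D ℓ ≤ a := fun ℓ a h =>
    limsup_le_of_le (bd4 ℓ) h
  have C0 : ∀ ℓ, 0 ≤ C ℓ := fun ℓ =>
    le_limsup_of_frequently_le (Eventually.of_forall fun m => by linarith [Fm ℓ m]).frequently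
      (bd1 ℓ)
  have Canti : Antitone C := antitone_nat_of_succ_le fun ℓ => by
    refine le_of_forall_pos_le_add fun ε hε => Cle _ _ ?_
    filter_upwards [E ℓ (ε / 2) (by positivity), Cev ℓ (ε / 2) (by positivity)] with m h1 h2
    have : F (ℓ + 1 + 1) m = F (ℓ + 2) m := rfl
    linarith
  -- eventual monotonicity
  have Emul : ∀ ℓ k, ∀ ε > 0, ∀ᶠ m in atTop,
      F (k + ℓ + 1) m - F (k + ℓ) m ≤ F (k + 1) m - F k m + ε := by
    intro ℓ k
    induction ℓ with
    | zero => intro ε hε; exact Eventually.of_forall fun m => by simp; linarith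
    | succ ℓ ih =>
      intro ε hε
      filter_upwards [ih (ε / 2) (by positivity), E (k + ℓ) (ε / 2) (by positivity)] with m h1 h2
      have : F (k + (ℓ + 1) + 1) m = F (k + ℓ + 2) m := rfl
      have : F (k + (ℓ + 1)) m = F (k + ℓ + 1) m := rfl
      linarith
  have tel : ∀ ℓ m, F ℓ m = ∑ k ∈ Finset.range ℓ, (F (k + 1) m - F k m) := by
    intro ℓ m
    rw [Finset.sum_range_sub (fun k => F k m), F0, sub_zero]
  have CD : ∀ ℓ : ℕ, 0 < ℓ → C ℓ ≤ D ℓ := by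
    intro ℓ hℓ
    have hℓ' : (0 : ℝ) < ℓ := by exact_mod_cast hℓ
    refine le_of_forall_pos_le_add fun ε hε => Cle _ _ ?_
    have : ∀ᶠ m in atTop, ∀ k ∈ Finset.range ℓ,
        F (ℓ + 1) m - F ℓ m ≤ F (k + 1) m - F k m + ε / 2 := by
      rw [Filter.eventually_all_finset]
      intro k hk
      have hk' := Finset.mem_range.1 hk
      have := Emul (ℓ - k) k (ε / 2) (by positivity)
      rwa [show k + (ℓ - k) = ℓ by omega] at this
    filter_upwards [this, Dev ℓ (ε / 2) (by positivity)] with m h1 h2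
    have h3 := Finset.sum_le_sum h1
    rw [Finset.sum_add_distrib, ← tel] at h3
    simp only [Finset.sum_const, Finset.card_range, nsmul_eq_mul] at h3
    have h4 : F (ℓ + 1) m - F ℓ m ≤ F ℓ m / ℓ + ε / 2 := by
      have : F ℓ m / ℓ + ε / 2 = (F ℓ m + ℓ * (ε / 2)) / ℓ := by field_simp
      rw [this, le_div_iff₀ hℓ']
      linarith
    linarith
  have DC : ∀ ℓ : ℕ, 0 < ℓ → D ℓ ≤ (ℓ : ℝ)⁻¹ * ∑ k ∈ Finset.range ℓ, C k := by
    intro ℓ hℓ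
    have hℓ' : (0 : ℝ) < ℓ := by exact_mod_cast hℓ
    refine le_of_forall_pos_le_add fun ε hε => Dle _ _ ?_
    have : ∀ᶠ m in atTop, ∀ k ∈ Finset.range ℓ, F (k + 1) m - F k m ≤ C k + ε := by
      rw [Filter.eventually_all_finset]
      intro k hk
      exact (Cev k ε hε).mono fun m h => h.le
    filter_upwards [this] with m h1
    have h3 := Finset.sum_le_sum h1
    rw [Finset.sum_add_distrib, ← tel] at h3
    simp only [Finset.sum_const, Finset.card_range, nsmul_eq_mul] at h3
    rw [div_le_iff₀ hℓ']
    calc _ ≤ _ := h3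
      _ = _ := by field_simp
  obtain ⟨L, hL⟩ : ∃ L, Tendsto C atTop (𝓝 L) :=
    ⟨_, tendsto_atTop_ciInf Canti ⟨0, by rintro _ ⟨ℓ, rfl⟩; exact C0 ℓ⟩⟩
  have hDL : Tendsto D atTop (𝓝 L) := by
    refine tendsto_of_tendsto_of_tendsto_of_le_of_le' hL hL.cesaro ?_ ?_
    · filter_upwards [eventually_gt_atTop 0] with ℓ h using CD ℓ h
    · filter_upwards [eventually_gt_atTop 0] with ℓ h using DC ℓ h
  rw [hDL.limsup_eq]
  exact hL

theorem tendsto_limsup_condEntropy (x : ℕ → Bool) :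
    Filter.Tendsto (fun ℓ => atTop.limsup fun n => condEntropy ℓ x n) atTop
      (nhds (hUp x)) := by
  have hlog : 0 < Real.log 2 := Real.log_pos (by norm_num)
  have h1 : ∀ ℓ, (atTop.limsup fun n => condEntropy ℓ x n) =
      atTop.limsup fun m => entF x (ℓ + 1) m / Real.log 2 - entF x ℓ m / Real.log 2 := by
    intro ℓ
    rw [← Filter.limsup_nat_add _ (ℓ + 1)]
    simp only [condEntropy_eq, sub_div]
  have h2 : ∀ ℓ : ℕ, (atTop.limsup fun n => hBlock ℓ x n) =
      atTop.limsup fun m => entF x ℓ m / Real.log 2 / (ℓ : ℝ) := by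
    intro ℓ
    rw [← Filter.limsup_nat_add _ ℓ]
    simp only [hBlock_eq, div_div, mul_comm]
  unfold hUp
  simp only [h1, h2]
  refine abstract_limit (fun ℓ m => entF x ℓ m / Real.log 2) (fun m => by simp [entF_zero])
    (fun ℓ m => div_nonneg (entF_nonneg x ℓ m) hlog.le) (fun ℓ => 2 ^ ℓ / Real.log 2)
    (fun ℓ m => by have := entF_le x ℓ m; gcongr)
    (fun ℓ m => by have := entF_mono x ℓ m; gcongr) ?_
  intro ℓ ε hε
  have t := (entF_shift x (ℓ + 1)).sub (entF_shift x ℓ)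
  rw [sub_zero] at t
  filter_upwards [t.eventually_le_const (show 0 < ε * Real.log 2 by positivity)] with m hm
  have := entF_ssa x ℓ m
  rw [← sub_div, ← sub_div, ← sub_le_iff_le_add', ← sub_div, div_le_iff₀ hlog]
  linarith
end

section
/- There exists x ∈ B^ℕ such that β̲(x) = β̄(x), γ̲(x) = γ̄(x), and β̄(x) < γ̲(x). In particular the functions β̲ and γ̲ are different, and so are β̄ and γ̄. -/
open Filter Topology

lemma avg_lift (e : ℕ → ℝ) (h0 : ∀ i, 0 ≤ e i) (C : ℝ) (h1 : ∀ i, e i ≤ C) (K off : ℕ) (hK : 0 < K) (c : ℝ)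
    (h : Tendsto (fun Q : ℕ => (∑ q ∈ Finset.range Q, ∑ p ∈ Finset.range K, e (off + (K * q + p))) / (Q : ℝ))
      atTop (𝓝 c)) :
    Tendsto (fun N : ℕ => (∑ i ∈ Finset.range N, e i) / (N : ℝ)) atTop (𝓝 (c / K)) := by
  have hC : 0 ≤ C := (h0 0).trans (h1 0)
  have hT : ∀ Q : ℕ, ∑ q ∈ Finset.range Q, ∑ p ∈ Finset.range K, e (off + (K * q + p))
      = ∑ i ∈ Finset.range (K * Q), e (off + i) := by
    intro Q
    induction Q with
    | zero => simp
    | succ Q ih => rw [Finset.sum_range_succ, ih, Nat.mul_succ, Finset.sum_range_add]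
  simp_rw [hT] at h
  have hdiv : Tendsto (fun N : ℕ => N / K) atTop atTop := Nat.tendsto_div_const_atTop hK.ne'
  have h2 := h.comp hdiv
  have h3 : Tendsto (fun N : ℕ => ((N / K : ℕ) : ℝ) / (N : ℝ)) atTop (𝓝 (1 / K)) := by
    have := tendsto_nat_floor_mul_div_atTop (R := ℝ) (a := 1 / K) (by positivity)
    have := this.comp (tendsto_natCast_atTop_atTop (R := ℝ))
    refine this.congr fun N => ?_
    simp only [Function.comp]
    rw [one_div, inv_mul_eq_div, Nat.floor_div_natCast, Nat.floor_natCast]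
  have h4 := h2.mul h3
  have hbd : Tendsto (fun N : ℕ => (∑ i ∈ Finset.range N, e i) / (N : ℝ)
      - (∑ i ∈ Finset.range (K * (N / K)), e (off + i)) / (N : ℝ)) atTop (𝓝 0) := by
    apply squeeze_zero_norm (a := fun N : ℕ => ((off + K : ℕ) * C) / (N : ℝ))
    · intro N
      rw [← sub_div, norm_div, Real.norm_natCast]
      gcongr
      rw [Real.norm_eq_abs]
      have hb : ∀ m n : ℕ, ∑ i ∈ Finset.range n, e (m + i) ≤ n * C := by
        intro m n
        calc _ ≤ ∑ i ∈ Finset.range n, C := Finset.sum_le_sum fun i _ => h1 _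
          _ = _ := by simp
      have hn : ∀ m n : ℕ, 0 ≤ ∑ i ∈ Finset.range n, e (m + i) := 
        fun m n => Finset.sum_nonneg fun i _ => h0 _
      have e1 := Finset.sum_range_add e off (K * (N / K))
      have e2 := Finset.sum_range_add e (K * (N / K)) (N % K)
      have e3 := Finset.sum_range_add e (K * (N / K)) off
      rw [Nat.div_add_mod] at e2
      rw [add_comm off, e3] at e1
      have b1 := hb (K * (N / K)) (N % K)
      have b2 := hb 0 off
      have b3 := hb (K * (N / K)) off
      have n1 := hn (K * (N / K)) (N % K)
      have n2 := hn 0 off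
      have n3 := hn (K * (N / K)) off
      simp only [zero_add] at b2 n2
      have hm : ((N % K : ℕ) : ℝ) * C ≤ K * C := by
        gcongr
        exact (Nat.mod_lt _ hK).le
      have : 0 ≤ (K : ℝ) * C := by positivity
      push_cast
      rw [abs_le]
      constructor <;> nlinarith
    · exact tendsto_const_div_atTop_nhds_zero_nat _
  have h5 := hbd.add h4
  rw [zero_add, mul_one_div] at h5
  refine h5.congr' ?_
  filter_upwards [eventually_ge_atTop K] with N hN
  have : ((N / K : ℕ) : ℝ) ≠ 0 := by
    have := Nat.div_pos hN hK
    positivity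
  simp only [Function.comp]
  field_simp
  ring

lemma inf_lim {ι : Type} [Fintype ι] [Nonempty ι] (E : ι → ℕ → ℝ) (L : ι → ℝ) (c : ℝ)
    (h : ∀ f, Tendsto (fun N : ℕ => E f N / N) atTop (𝓝 (L f))) (hc : ∀ f, c ≤ L f)
    (f0 : ι) (hf0 : L f0 ≤ c) (l : ℕ) :
    Tendsto (fun n : ℕ => 1 / ((n : ℝ) - l) * 
      (Finset.univ : Finset ι).inf' Finset.univ_nonempty (fun f => E f (n - l))) atTop (𝓝 c) := by
  have key : Tendsto (fun N : ℕ => 1 / (N : ℝ) * 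
      (Finset.univ : Finset ι).inf' Finset.univ_nonempty (fun f => E f N)) atTop (𝓝 c) := by
    rw [tendsto_order]
    constructor
    · intro a ha
      have : ∀ᶠ N : ℕ in atTop, ∀ f, a < E f N / N :=
        eventually_all.2 fun f => (tendsto_order.1 (h f)).1 a (ha.trans_le (hc f))
      filter_upwards [this, eventually_gt_atTop 0] with N hN hpos
      have hp : (0 : ℝ) < N := by exact_mod_cast hpos
      rw [one_div, inv_mul_eq_div, lt_div_iff₀ hp, Finset.lt_inf'_iff]
      intro f _
      rw [← lt_div_iff₀ hp]
      exact hN f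
    · intro a ha
      filter_upwards [(tendsto_order.1 (h f0)).2 a (hf0.trans_lt ha), eventually_gt_atTop 0] with N hN hpos
      have hp : (0 : ℝ) < N := by exact_mod_cast hpos
      rw [one_div, inv_mul_eq_div]
      refine lt_of_le_of_lt ?_ hN
      gcongr
      exact Finset.inf'_le _ (Finset.mem_univ _)
  refine (key.comp (tendsto_sub_atTop_nat l)).congr' ?_
  filter_upwards [eventually_ge_atTop l] with n hn
  simp [Nat.cast_sub hn]

open MeasureTheory ProbabilityTheory in
lemma slln_window {Ω : Type} {mΩ : MeasurableSpace Ω} (P : Measure Ω) [IsProbabilityMeasure P]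
    (Y : ℕ → Ω → Bool × Bool) (hm : ∀ i, Measurable (Y i))
    (hl : ∀ i, HasLaw (Y i) (PMF.uniformOfFintype (Bool × Bool)).toMeasure P)
    (hi : iIndepFun Y P) (k : ℕ) (F : (Fin k → Bool × Bool) → ℕ) (r : ℕ) :
    ∀ᵐ ω ∂P, Tendsto (fun Q : ℕ => (∑ q ∈ Finset.range Q,
      (F (fun j => Y ((k + 1) * q + r + j) ω) : ℝ)) / (Q : ℝ)) atTop
      (𝓝 ((∑ w, (F w : ℝ)) / 4 ^ k)) := by
  let ν : Measure (Bool × Bool) := (PMF.uniformOfFintype (Bool × Bool)).toMeasure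
  let W : ℕ → Ω → (Fin k → Bool × Bool) := fun q ω j => Y ((k + 1) * q + r + j) ω
  have hW : ∀ q, Measurable (W q) := fun q => measurable_pi_lambda _ fun j => hm _
  have hF : Measurable (fun w => (F w : ℝ)) := Measurable.of_discrete
  have hmap : ∀ q, P.map (W q) = Measure.pi (fun _ : Fin k => ν) := by
    intro q
    have hinj : Function.Injective (fun j : Fin k => (k + 1) * q + r + (j : ℕ)) := by
      intro a b hab
      ext
      simpa using hab
    have := (hi.precomp hinj).map_fun_eq_pi_map (fun j => (hm _).aemeasurable)
    simp only [(hl _).map_eq] at this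
    exact this
  have hmean : P[fun ω => (F (W 0 ω) : ℝ)] = (∑ w, (F w : ℝ)) / 4 ^ k := by
    rw [← integral_map (f := fun w => (F w : ℝ)) (hW 0).aemeasurable hF.aestronglyMeasurable, hmap,
      integral_fintype Integrable.of_finite, Finset.sum_div]
    refine Finset.sum_congr rfl fun w _ => ?_
    have : (Measure.pi fun _ : Fin k => ν).real {w} = 1 / 4 ^ k := by
      rw [measureReal_def, Measure.pi_singleton]
      simp only [ν, PMF.toMeasure_apply_singleton _ _ (measurableSet_singleton _),
        PMF.uniformOfFintype_apply]
      simp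
    rw [this, smul_eq_mul]
    ring
  rw [← hmean]
  apply strong_law_ae_real (fun q ω => (F (W q ω) : ℝ))
  · have : Integrable (fun w => (F w : ℝ)) (P.map (W 0)) := by
      rw [hmap]; exact Integrable.of_finite
    exact this.comp_measurable (hW 0)
  · intro a b hab
    let S : ℕ → Finset ℕ := fun q => Finset.univ.image (fun j : Fin k => (k + 1) * q + r + (j : ℕ))
    have hS : Disjoint (S a) (S b) := by
      rw [Finset.disjoint_left]
      intro n hn hn'
      simp only [S, Finset.mem_image, Finset.mem_univ, true_and] at hn hn'
      obtain ⟨i, hi⟩ := hn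
      obtain ⟨j, hj⟩ := hn'
      apply hab
      have h1 : ((k + 1) * a + i) / (k + 1) = a := by
        rw [Nat.mul_add_div (by omega), Nat.div_eq_of_lt (by omega)]; rfl
      have h2 : ((k + 1) * b + j) / (k + 1) = b := by
        rw [Nat.mul_add_div (by omega), Nat.div_eq_of_lt (by omega)]; rfl
      have h3 : (k + 1) * a + i = (k + 1) * b + (j : ℕ) := by omega
      rw [← h1, h3, h2]
    have hind := hi.indepFun_finset (S a) (S b) hS hm
    have hmem : ∀ q (j : Fin k), (k + 1) * q + r + (j : ℕ) ∈ S q := fun q j =>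
      Finset.mem_image_of_mem _ (Finset.mem_univ _)
    exact hind.comp (φ := fun u => (F (fun j => u ⟨_, hmem a j⟩) : ℝ))
      (ψ := fun u => (F (fun j => u ⟨_, hmem b j⟩) : ℝ)) 
      Measurable.of_discrete Measurable.of_discrete
  · intro q
    have : IdentDistrib (W q) (W 0) P P := 
      ⟨(hW q).aemeasurable, (hW 0).aemeasurable, by rw [hmap, hmap]⟩
    exact this.comp hF

open MeasureTheory ProbabilityTheory in
lemma exists_normal : ∃ y : ℕ → Bool × Bool, ∀ (k : ℕ) (F : (Fin k → Bool × Bool) → ℕ),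
    Tendsto (fun N : ℕ => (∑ q ∈ Finset.range N, (F (fun j => y (q + j)) : ℝ)) / (N : ℝ)) atTop
      (𝓝 ((∑ w, (F w : ℝ)) / 4 ^ k)) := by
  obtain ⟨Ω, mΩ, P, Y, hm, hl, hi, hP⟩ :=
    exists_iid.{0, 0} ℕ (PMF.uniformOfFintype (Bool × Bool)).toMeasure
  have hall : ∀ᵐ ω ∂P, ∀ (k : ℕ) (F : (Fin k → Bool × Bool) → ℕ) (r : ℕ),
      Tendsto (fun Q : ℕ => (∑ q ∈ Finset.range Q,
      (F (fun j => Y ((k + 1) * q + r + j) ω) : ℝ)) / (Q : ℝ)) atTop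
      (𝓝 ((∑ w, (F w : ℝ)) / 4 ^ k)) := by
    simp_rw [ae_all_iff]
    intro k F r
    exact slln_window P Y hm hl hi k F r
  obtain ⟨ω, hω⟩ := hall.exists
  refine ⟨fun i => Y i ω, fun k F => ?_⟩
  have := avg_lift (fun i => (F (fun j => Y (i + j) ω) : ℝ)) (fun i => by positivity)
    (∑ w, (F w : ℝ)) (fun i => Finset.single_le_sum (f := fun w => (F w : ℝ))
      (fun w _ => by positivity) (Finset.mem_univ _)) (k + 1) 0 (by omega)
    (∑ p ∈ Finset.range (k + 1), (∑ w, (F w : ℝ)) / 4 ^ k) (by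
      refine (tendsto_finsetSum (Finset.range (k + 1)) fun r _ => hω k F r).congr fun Q => ?_
      rw [Finset.sum_comm, Finset.sum_div]
      simp)
  convert this using 2
  rw [Finset.sum_const, Finset.card_range, nsmul_eq_mul]
  field_simp

lemma sum_update_avg {k : ℕ} (m : Fin k) (F : (Fin k → Bool × Bool) → ℕ) :
    ∑ w, ∑ s, F (Function.update w m s) = 4 * ∑ w, F w := by
  have key : ∀ (a s : Bool × Bool) v, Function.update ((Equiv.funSplitAt m (Bool × Bool)).symm (a, v)) m s
      = (Equiv.funSplitAt m (Bool × Bool)).symm (s, v) := by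
    intro a s v
    ext1 j
    by_cases h : j = m
    · subst h; simp
    · simp [h]
  rw [← (Equiv.funSplitAt m (Bool × Bool)).symm.sum_comp, 
    ← (Equiv.funSplitAt m (Bool × Bool)).symm.sum_comp F, Fintype.sum_prod_type,
    Fintype.sum_prod_type (f := fun x => F ((Equiv.funSplitAt m (Bool × Bool)).symm x))]
  simp_rw [key]
  rw [Finset.sum_const, Finset.sum_comm]
  simp

lemma block_lim {y : ℕ → Bool × Bool} (hy : ∀ (k : ℕ) (F : (Fin k → Bool × Bool) → ℕ),
    Tendsto (fun N : ℕ => (∑ q ∈ Finset.range N, (F (fun j => y (q + j)) : ℝ)) / (N : ℝ)) atTop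
      (𝓝 ((∑ w, (F w : ℝ)) / 4 ^ k)))
    (G : (ℕ → Bool × Bool) → ℕ) (k m : ℕ) (hm : m < k)
    (hG : ∀ z z', (∀ i < k, z i = z' i) → G z = G z') :
    ∃ L : ℝ, Tendsto (fun N : ℕ => (∑ q ∈ Finset.range N, (G (fun j => y (q + j)) : ℝ)) / (N : ℝ))
      atTop (𝓝 L) ∧
      ∀ c : ℕ, ((∀ z, c ≤ ∑ s, G (Function.update z m s)) → (c : ℝ) / 4 ≤ L) ∧
        ((∀ z, ∑ s, G (Function.update z m s) ≤ c) → L ≤ (c : ℝ) / 4) := by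
  let ext : (Fin k → Bool × Bool) → (ℕ → Bool × Bool) :=
    fun w i => if h : i < k then w ⟨i, h⟩ else default
  let F : (Fin k → Bool × Bool) → ℕ := fun w => G (ext w)
  have hup : ∀ w s, F (Function.update w ⟨m, hm⟩ s) = G (Function.update (ext w) m s) := by
    intro w s
    apply hG
    intro i hi
    by_cases h : i = m
    · subst h; simp [ext, hi]
    · simp [ext, hi, h]
  have hs := sum_update_avg ⟨m, hm⟩ F
  simp_rw [hup] at hs
  have hs' : (4 : ℝ) * ∑ w, (F w : ℝ) = ((∑ w, ∑ s, G (Function.update (ext w) m s) : ℕ) : ℝ) := by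
    rw [hs]; push_cast; rfl
  have hcard : (∑ w : Fin k → Bool × Bool, (1 : ℕ)) = 4 ^ k := by simp
  refine ⟨_, (hy k F).congr fun N => ?_, fun c => ⟨fun h => ?_, fun h => ?_⟩⟩
  · congr 1
    refine Finset.sum_congr rfl fun q _ => ?_
    congr 1
    apply hG
    intro i hi
    simp [ext, hi]
  · have : c * 4 ^ k ≤ ∑ w, ∑ s, G (Function.update (ext w) m s) := by
      rw [← hcard, Finset.mul_sum]
      exact Finset.sum_le_sum fun w _ => by simpa using h (ext w)
    have : ((c * 4 ^ k : ℕ) : ℝ) ≤ 4 * ∑ w, (F w : ℝ) := by rw [hs']; exact_mod_cast this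
    push_cast at this
    rw [div_le_div_iff₀ (by norm_num) (by positivity)]
    linarith
  · have : ∑ w, ∑ s, G (Function.update (ext w) m s) ≤ c * 4 ^ k := by
      rw [← hcard, Finset.mul_sum]
      exact Finset.sum_le_sum fun w _ => by simpa using h (ext w)
    have : 4 * ∑ w, (F w : ℝ) ≤ ((c * 4 ^ k : ℕ) : ℝ) := by rw [hs']; exact_mod_cast this
    push_cast at this
    rw [div_le_div_iff₀ (by positivity) (by norm_num)]
    linarith

/-- The 9-bit block `1 1 0 a 0 b 0 (a∧b) 0` coding the symbol `(a,b)`. -/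
def blockCode (s : Bool × Bool) (p : ℕ) : Bool :=
  match p with
  | 0 => true
  | 1 => true
  | 3 => s.1
  | 5 => s.2
  | 7 => s.1 && s.2
  | _ => false

/-- The concatenation of the blocks of the symbols of `y`. -/
def codeSeq (y : ℕ → Bool × Bool) (i : ℕ) : Bool := blockCode (y (i / 9)) (i % 9)

lemma codeSeq_block (y : ℕ → Bool × Bool) (q p : ℕ) (hp : p < 9) :
    codeSeq y (9 * q + p) = blockCode (y q) p := by
  unfold codeSeq
  rw [show (9 * q + p) / 9 = q by omega, show (9 * q + p) % 9 = p by omega]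

lemma codeSeq_shift (y : ℕ → Bool × Bool) (q i : ℕ) :
    codeSeq y (9 * q + i) = codeSeq (fun j => y (q + j)) i := by
  unfold codeSeq
  rw [show (9 * q + i) / 9 = q + i / 9 by omega, show (9 * q + i) % 9 = i % 9 by omega]

lemma codeSeq_congr {z z' : ℕ → Bool × Bool} {i : ℕ} (h : z (i / 9) = z' (i / 9)) :
    codeSeq z i = codeSeq z' i := by
  unfold codeSeq
  rw [h]

lemma codeSeq_update (z : ℕ → Bool × Bool) (m : ℕ) (s : Bool × Bool) (i : ℕ) :
    codeSeq (Function.update z m s) i = if i / 9 = m then blockCode s (i % 9) else codeSeq z i := by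
  unfold codeSeq
  rw [Function.update_apply]
  split_ifs <;> rfl

/-- Backward prediction error at `i`. -/
def errB {l : ℕ} (f : (Fin l → Bool) → Bool) (z : ℕ → Bool × Bool) (i : ℕ) : ℕ :=
  if codeSeq z i ≠ f (fun j => codeSeq z (i + 1 + j)) then 1 else 0

/-- Forward prediction error at `i + l`. -/
def errC {l : ℕ} (f : (Fin l → Bool) → Bool) (z : ℕ → Bool × Bool) (i : ℕ) : ℕ :=
  if codeSeq z (i + l) ≠ f (fun j => codeSeq z (i + j)) then 1 else 0

/-- Optimal backward predictor. -/
def predB (l : ℕ) (v : Fin (l + 10) → Bool) : Bool :=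
  (v ⟨8, by omega⟩ && v ⟨9, by omega⟩) || (v ⟨7, by omega⟩ && v ⟨8, by omega⟩) ||
  (v ⟨3, by omega⟩ && v ⟨4, by omega⟩ && v ⟨1, by omega⟩) ||
  (v ⟨5, by omega⟩ && v ⟨6, by omega⟩ && v ⟨3, by omega⟩)

/-- Optimal forward predictor. -/
def predC (l : ℕ) (v : Fin (l + 10) → Bool) : Bool :=
  (v ⟨l + 1, by omega⟩ && v ⟨l + 2, by omega⟩) || (v ⟨l, by omega⟩ && v ⟨l + 1, by omega⟩) ||
  (v ⟨l + 3, by omega⟩ && v ⟨l + 4, by omega⟩ && v ⟨l + 6, by omega⟩ && v ⟨l + 8, by omega⟩)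

lemma sum9 (g : ℕ → ℕ) : ∑ p ∈ Finset.range 9, g p = 
    g 0 + g 1 + g 2 + g 3 + g 4 + g 5 + g 6 + g 7 + g 8 := by
  simp [Finset.sum_range_succ]

lemma sumA (g : Bool × Bool → ℕ) : ∑ s, g s = 
    g (true, true) + g (true, false) + g (false, true) + g (false, false) := by
  simp [Fintype.sum_prod_type]; ring

lemma errB_lower {l : ℕ} (f : (Fin l → Bool) → Bool) (z : ℕ → Bool × Bool) :
    3 ≤ ∑ s, ∑ p ∈ Finset.range 9, errB f (Function.update z 0 s) p := by
  have hctx : ∀ (s t : Bool × Bool) (p : ℕ), (∀ r, p < r → r < 9 → blockCode s r = blockCode t r) →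
      f (fun j => codeSeq (Function.update z 0 s) (p + 1 + j)) = 
      f (fun j => codeSeq (Function.update z 0 t) (p + 1 + j)) := by
    intro s t p h
    congr 1
    funext j
    rw [codeSeq_update, codeSeq_update]
    split_ifs with h'
    · exact h _ (by omega) (by omega)
    · rfl
  have e7 : ∀ s, f (fun j => codeSeq (Function.update z 0 s) (7 + 1 + j)) = 
      f (fun j => codeSeq (Function.update z 0 (false, false)) (7 + 1 + j)) := by
    intro s
    apply hctx
    intro r h1 h2
    interval_cases r
    rfl
  have e5 : ∀ s, (s.1 && s.2) = false → f (fun j => codeSeq (Function.update z 0 s) (5 + 1 + j)) = 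
      f (fun j => codeSeq (Function.update z 0 (false, false)) (5 + 1 + j)) := by
    intro s hs
    apply hctx
    intro r h1 h2
    interval_cases r
    · rfl
    · exact hs
    · rfl
  have e3 : ∀ s, s.2 = false → f (fun j => codeSeq (Function.update z 0 s) (3 + 1 + j)) = 
      f (fun j => codeSeq (Function.update z 0 (false, false)) (3 + 1 + j)) := by
    intro s hs
    apply hctx
    intro r h1 h2
    interval_cases r <;> simp [blockCode, hs]
  have hc : ∀ s p, p < 9 → codeSeq (Function.update z 0 s) p = blockCode s p := by
    intro s p hp
    rw [codeSeq_update, if_pos (by omega), Nat.mod_eq_of_lt hp]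
  have hle : ∀ s, errB f (Function.update z 0 s) 3 + errB f (Function.update z 0 s) 5 + 
      errB f (Function.update z 0 s) 7 ≤ ∑ p ∈ Finset.range 9, errB f (Function.update z 0 s) p := by
    intro s
    rw [sum9]
    omega
  refine le_trans ?_ (Finset.sum_le_sum fun s _ => hle s)
  rw [sumA]
  unfold errB
  rw [e7 (true, true), e7 (true, false), e7 (false, true), e5 (true, false) rfl, e5 (false, true) rfl,
    e3 (true, false) rfl]
  simp only [hc _ _ (show 3 < 9 by norm_num), hc _ _ (show 5 < 9 by norm_num), 
    hc _ _ (show 7 < 9 by norm_num)]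
  generalize f (fun j => codeSeq (Function.update z 0 (false, false)) (7 + 1 + j)) = g7
  generalize f (fun j => codeSeq (Function.update z 0 (false, false)) (5 + 1 + j)) = g5
  generalize f (fun j => codeSeq (Function.update z 0 (false, false)) (3 + 1 + j)) = g3
  revert g7 g5 g3
  simp only [blockCode]
  generalize f _ = u1
  generalize f _ = u2
  generalize f _ = u3
  revert u1 u2 u3
  decide

lemma errC_lower {l : ℕ} (f : (Fin l → Bool) → Bool) (z : ℕ → Bool × Bool) :
    4 ≤ ∑ s, ∑ p ∈ Finset.range 9, errC f (Function.update z l s) (8 * l + p) := by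
  have hctx : ∀ (s t : Bool × Bool) (p : ℕ), (∀ r, r < p → blockCode s r = blockCode t r) →
      f (fun j => codeSeq (Function.update z l s) (8 * l + p + j)) = 
      f (fun j => codeSeq (Function.update z l t) (8 * l + p + j)) := by
    intro s t p h
    congr 1
    funext j
    rw [codeSeq_update, codeSeq_update]
    split_ifs with h'
    · exact h _ (by omega)
    · rfl
  have e3 : ∀ s, f (fun j => codeSeq (Function.update z l s) (8 * l + 3 + j)) = 
      f (fun j => codeSeq (Function.update z l (false, false)) (8 * l + 3 + j)) := by
    intro s
    apply hctx
    intro r h1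
    interval_cases r <;> rfl
  have e5 : ∀ s t, s.1 = t.1 → f (fun j => codeSeq (Function.update z l s) (8 * l + 5 + j)) = 
      f (fun j => codeSeq (Function.update z l t) (8 * l + 5 + j)) := by
    intro s t hs
    apply hctx
    intro r h1
    interval_cases r <;> simp [blockCode, hs]
  have hc : ∀ s p, p < 9 → codeSeq (Function.update z l s) (8 * l + p + l) = blockCode s p := by
    intro s p hp
    rw [codeSeq_update, if_pos (by omega), show (8 * l + p + l) % 9 = p by omega]
  have hle : ∀ s, errC f (Function.update z l s) (8 * l + 3) + errC f (Function.update z l s) (8 * l + 5)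
       ≤ ∑ p ∈ Finset.range 9, errC f (Function.update z l s) (8 * l + p) := by
    intro s
    rw [sum9]
    omega
  refine le_trans ?_ (Finset.sum_le_sum fun s _ => hle s)
  rw [sumA]
  unfold errC
  rw [e3 (true, true), e3 (true, false), e3 (false, true), e5 (true, true) (true, false) rfl,
    e5 (false, true) (false, false) rfl]
  simp only [hc _ _ (show 3 < 9 by norm_num), hc _ _ (show 5 < 9 by norm_num)]
  simp only [blockCode]
  generalize f _ = u1
  generalize f _ = u2
  generalize f _ = u3
  revert u1 u2 u3
  decide

lemma errB_upper (l : ℕ) (z : ℕ → Bool × Bool) :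
    ∑ s, ∑ p ∈ Finset.range 9, errB (predB l) (Function.update z 0 s) p ≤ 3 := by
  have h : ∀ y : ℕ → Bool × Bool, ∑ p ∈ Finset.range 9, errB (predB l) y p
      = (if (y 0).1 || (y 0).2 then 1 else 0) := by
    intro y
    rw [sum9]
    simp only [errB, predB, codeSeq]
    norm_num
    generalize y 0 = s
    generalize y 1 = t
    generalize y 2 = u
    revert s t u
    decide
  simp_rw [h]
  rw [sumA]
  simp

lemma errC_upper (l : ℕ) (z : ℕ → Bool × Bool) :
    ∑ s, ∑ p ∈ Finset.range 9,
      errC (predC l) (Function.update z (l + 10) s) (8 * (l + 10) + p) ≤ 4 := by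
  have h : ∀ y : ℕ → Bool × Bool, ∑ p ∈ Finset.range 9, errC (predC l) y (8 * (l + 10) + p)
      = (if (y (l + 10)).1 then 1 else 0) + (if (y (l + 10)).2 then 1 else 0) := by
    intro y
    have h0 : ∀ p t, codeSeq y (8 * (l + 10) + p + (l + t)) =
        codeSeq (fun j => y (l + 8 + j)) (8 + p + t) := by
      intro p t
      rw [← codeSeq_shift]
      congr 1
      ring
    have h1 : ∀ p, codeSeq y (8 * (l + 10) + p + l) =
        codeSeq (fun j => y (l + 8 + j)) (8 + p) := fun p => h0 p 0
    rw [sum9]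
    simp only [errC, predC, h0, h1]
    simp only [codeSeq]
    norm_num
    generalize y (l + 8) = s
    generalize y (l + 9) = t
    generalize y (l + 10) = u
    revert s t u
    decide
  simp_rw [h]
  rw [sumA]
  simp

lemma beta_lim {y : ℕ → Bool × Bool} (hy : ∀ (k : ℕ) (F : (Fin k → Bool × Bool) → ℕ),
    Tendsto (fun N : ℕ => (∑ q ∈ Finset.range N, (F (fun j => y (q + j)) : ℝ)) / (N : ℝ)) atTop
      (𝓝 ((∑ w, (F w : ℝ)) / 4 ^ k))) (l : ℕ) :
    Tendsto (fun n => betaWord (l + 10) (codeSeq y) n) atTop (𝓝 (1 / 12)) := by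
  have hex : ∀ f : (Fin (l + 10) → Bool) → Bool, ∃ L : ℝ,
      Tendsto (fun N : ℕ => (∑ i ∈ Finset.range N, (errB f y i : ℝ)) / (N : ℝ)) atTop (𝓝 L) ∧
      1 / 12 ≤ L ∧ (f = predB l → L ≤ 1 / 12) := by
    intro f
    obtain ⟨L, hL, hc⟩ := block_lim hy (fun z => ∑ p ∈ Finset.range 9, errB f z p) (l + 11) 0 (by omega) (by
      intro z z' h
      refine Finset.sum_congr rfl fun p hp => ?_
      rw [Finset.mem_range] at hp
      have h1 : codeSeq z p = codeSeq z' p := codeSeq_congr (h _ (by omega))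
      have h2 : (fun j : Fin (l + 10) => codeSeq z (p + 1 + j)) = fun j : Fin (l + 10) => codeSeq z' (p + 1 + j) :=
        funext fun j => codeSeq_congr (h _ (by omega))
      simp only [errB, h1, h2])
    refine ⟨L / (9 : ℕ), avg_lift (fun i => (errB f y i : ℝ)) (fun i => by positivity) 1 (fun i => ?_)
      9 0 (by norm_num) L (hL.congr fun Q => ?_), ?_, ?_⟩
    · unfold errB; split_ifs <;> simp
    · congr 1
      refine Finset.sum_congr rfl fun q _ => ?_
      push_cast
      refine Finset.sum_congr rfl fun p _ => ?_
      rw [zero_add]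
      simp only [errB, codeSeq_shift, add_assoc]
    · have := (hc 3).1 (errB_lower f)
      push_cast at *
      linarith
    · rintro rfl
      have := (hc 3).2 (errB_upper l)
      push_cast at *
      linarith
  choose L hL h1 h2 using hex
  refine (inf_lim _ L (1 / 12) hL h1 (predB l) (h2 _ rfl) (l + 10)).congr fun n => ?_
  unfold betaWord
  congr 2
  funext f
  simp [errB, Finset.card_filter]

lemma gamma_lim {y : ℕ → Bool × Bool} (hy : ∀ (k : ℕ) (F : (Fin k → Bool × Bool) → ℕ),
    Tendsto (fun N : ℕ => (∑ q ∈ Finset.range N, (F (fun j => y (q + j)) : ℝ)) / (N : ℝ)) atTop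
      (𝓝 ((∑ w, (F w : ℝ)) / 4 ^ k))) (l : ℕ) :
    Tendsto (fun n => gammaWord (l + 10) (codeSeq y) n) atTop (𝓝 (1 / 9)) := by
  have hex : ∀ f : (Fin (l + 10) → Bool) → Bool, ∃ L : ℝ,
      Tendsto (fun N : ℕ => (∑ i ∈ Finset.range N, (errC f y i : ℝ)) / (N : ℝ)) atTop (𝓝 L) ∧
      1 / 9 ≤ L ∧ (f = predC l → L ≤ 1 / 9) := by
    intro f
    obtain ⟨L, hL, hc⟩ := block_lim hy
      (fun z => ∑ p ∈ Finset.range 9, errC f z (8 * (l + 10) + p)) (l + 11) (l + 10) (by omega) (by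
      intro z z' h
      refine Finset.sum_congr rfl fun p hp => ?_
      rw [Finset.mem_range] at hp
      have h1 : codeSeq z (8 * (l + 10) + p + (l + 10)) = codeSeq z' (8 * (l + 10) + p + (l + 10)) :=
        codeSeq_congr (h _ (by omega))
      have h2 : (fun j : Fin (l + 10) => codeSeq z (8 * (l + 10) + p + j)) =
          fun j : Fin (l + 10) => codeSeq z' (8 * (l + 10) + p + j) :=
        funext fun j => codeSeq_congr (h _ (by omega))
      simp only [errC, h1, h2])
    refine ⟨L / (9 : ℕ), avg_lift (fun i => (errC f y i : ℝ)) (fun i => by positivity) 1 (fun i => ?_)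
      9 (8 * (l + 10)) (by norm_num) L (hL.congr fun Q => ?_), ?_, ?_⟩
    · unfold errC; split_ifs <;> simp
    · congr 1
      refine Finset.sum_congr rfl fun q _ => ?_
      push_cast
      refine Finset.sum_congr rfl fun p _ => ?_
      rw [add_left_comm]
      simp only [errC]
      rw [add_assoc (9 * q), codeSeq_shift]
      simp only [add_assoc (9 * q), codeSeq_shift]
    · have := (hc 4).1 (errC_lower f)
      push_cast at *
      linarith
    · rintro rfl
      have := (hc 4).2 (errC_upper l)
      push_cast at *
      linarith
  choose L hL h1 h2 using hex
  refine (inf_lim _ L (1 / 9) hL h1 (predC l) (h2 _ rfl) (l + 10)).congr fun n => ?_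
  unfold gammaWord
  congr 2
  funext f
  rw [Finset.card_filter, Finset.sum_Ico_eq_sum_range]
  push_cast
  refine Finset.sum_congr rfl fun i _ => ?_
  simp [errC, add_comm i]

theorem beta_ne_gamma :
    ∃ x : ℕ → Bool,
      betaLow x = betaUp x ∧ gammaLow x = gammaUp x ∧ betaUp x < gammaLow x ∧
      betaLow x ≠ gammaLow x ∧ betaUp x ≠ gammaUp x := by
  obtain ⟨y, hy⟩ := exists_normal
  have hev : ∀ (u : ℕ → ℝ) (c : ℝ), (∀ l, u (l + 10) = c) → Tendsto u atTop (𝓝 c) := by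
    intro u c h
    refine tendsto_const_nhds.congr' ?_
    filter_upwards [eventually_ge_atTop 10] with l hl
    obtain ⟨m, rfl⟩ := Nat.exists_eq_add_of_le' hl
    exact (h m).symm
  have b1 : betaLow (codeSeq y) = 1 / 12 :=
    (hev _ _ fun l => (beta_lim hy l).liminf_eq).liminf_eq
  have b2 : betaUp (codeSeq y) = 1 / 12 :=
    (hev _ _ fun l => (beta_lim hy l).limsup_eq).limsup_eq
  have g1 : gammaLow (codeSeq y) = 1 / 9 :=
    (hev _ _ fun l => (gamma_lim hy l).liminf_eq).liminf_eq
  have g2 : gammaUp (codeSeq y) = 1 / 9 :=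
    (hev _ _ fun l => (gamma_lim hy l).limsup_eq).limsup_eq
  refine ⟨codeSeq y, ?_, ?_, ?_, ?_, ?_⟩ <;> simp only [b1, b2, g1, g2] <;> norm_num
end

section
/- Let Q be a finite set, let P⁰ and P¹ be entrywise-nonnegative Q×Q real matrices such that P := P⁰ + P¹ is stochastic (every row sums to 1), and let π be a probability vector on Q with πP = π. For b ∈ {0,1} and i ∈ Q let θ_{i,b} := Σ_{j∈Q} Pᵇ_{ij}, and for a word u = b_1…b_k ∈ B^k define μ(u) := Σ_{q_0,…,q_k ∈ Q} π(q_0)·Π_{j=1}^{k} P^{b_j}_{q_{j−1} q_j}. If x ∈ B^ℕ is generic for μ, i.e., for every word u one has lim_{n→∞} occ(x[0:n), u)/n = μ(u), then γ̲(x) ≥ Σ_{i∈Q} π_i·min(θ_{i,0}, θ_{i,1}). -/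
open Filter Topology

/-- One step of the labelled Markov chain: read symbol `b`, updating the
distribution-like vector `v` using the substochastic matrix `P b`. -/
noncomputable def mcStep {Q : Type*} [Fintype Q] (P : Bool → Q → Q → ℝ)
    (v : Q → ℝ) (b : Bool) : Q → ℝ :=
  fun q => ∑ q' : Q, v q' * P b q' q

/-- `μ(b_1…b_k) = Σ_{q_0,…,q_k} π(q_0) · Π_{j=1}^k P^{b_j}_{q_{j-1} q_j}`. -/
noncomputable def mcMeasure {Q : Type*} [Fintype Q] (π : Q → ℝ)
    (P : Bool → Q → Q → ℝ) (u : List Bool) : ℝ :=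
  ∑ q : Q, (u.foldl (mcStep P) π) q

theorem factor_succ (x : ℕ → Bool) (i ℓ : ℕ) :
    factor x i (ℓ + 1) = List.ofFn (fun j : Fin ℓ => x (i + j)) ++ [x (i + ℓ)] := by
  unfold factor
  rw [List.ofFn_succ', List.concat_eq_append]
  simp

theorem errors_eq (ℓ : ℕ) (x : ℕ → Bool) (n : ℕ) (f : (Fin ℓ → Bool) → Bool) :
    ((Finset.Ico ℓ n).filter (fun i => x i ≠ f (fun j => x (i - ℓ + j)))).card
      = ∑ u : Fin ℓ → Bool, occ x n (List.ofFn u ++ [!f u]) := by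
  have h1 : ((Finset.Ico ℓ n).filter (fun i => x i ≠ f (fun j => x (i - ℓ + j)))).card
      = ((Finset.range (n - ℓ)).filter
          (fun i => x (i + ℓ) ≠ f (fun j => x (i + j)))).card := by
    symm
    apply Finset.card_bij (fun i _ => i + ℓ)
    · intro a ha
      simp only [Finset.mem_filter, Finset.mem_range, Finset.mem_Ico] at ha ⊢
      refine ⟨by omega, ?_⟩
      simpa using ha.2
    · intro a _ b _ h
      omega
    · intro b hb
      simp only [Finset.mem_filter, Finset.mem_Ico] at hb
      refine ⟨b - ℓ, ?_, by omega⟩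
      simp only [Finset.mem_filter, Finset.mem_range]
      refine ⟨by omega, ?_⟩
      rw [Nat.sub_add_cancel hb.1.1]
      exact hb.2
  rw [h1, Finset.card_eq_sum_card_fiberwise (f := fun i => (fun j : Fin ℓ => x (i + j)))
    (t := Finset.univ) (fun _ _ => by simp)]
  refine Finset.sum_congr rfl fun u _ => ?_
  unfold occ
  have hl : (List.ofFn u ++ [!f u]).length = ℓ + 1 := by simp
  rw [hl, Nat.add_sub_add_right, Finset.filter_filter]
  congr 1
  apply Finset.filter_congr
  intro i _
  rw [factor_succ]
  constructor
  · rintro ⟨h, rfl⟩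
    rw [Bool.eq_not.mpr h]
  · intro h
    obtain ⟨ha, hb⟩ := List.append_inj' h rfl
    have hu := List.ofFn_injective ha
    simp only [List.cons.injEq, and_true] at hb
    refine ⟨?_, hu⟩
    rw [hu, hb]
    simp

theorem foldl_nonneg {Q : Type*} [Fintype Q] (P : Bool → Q → Q → ℝ)
    (hP : ∀ b i j, 0 ≤ P b i j) (u : List Bool) (v : Q → ℝ) (hv : ∀ i, 0 ≤ v i) (q : Q) :
    0 ≤ (u.foldl (mcStep P) v) q := by
  induction u generalizing v with
  | nil => exact hv q
  | cons b u ih =>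
    exact ih _ fun i => Finset.sum_nonneg fun j _ => mul_nonneg (hv j) (hP _ _ _)

theorem sum_foldl {Q : Type*} [Fintype Q] (P : Bool → Q → Q → ℝ) (π : Q → ℝ)
    (hstat : ∀ j, ∑ i : Q, π i * (P false i j + P true i j) = π j) (ℓ : ℕ) (q : Q) :
    ∑ u : Fin ℓ → Bool, ((List.ofFn u).foldl (mcStep P) π) q = π q := by
  induction ℓ generalizing q with
  | zero => simp
  | succ ℓ ih =>
    rw [← (Fin.snocEquiv (fun _ => Bool)).sum_comp, Fintype.sum_prod_type]
    have h : ∀ (b : Bool) (u : Fin ℓ → Bool),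
        ((List.ofFn ((Fin.snocEquiv (fun _ => Bool)) (b, u))).foldl (mcStep P) π) q
          = ∑ q' : Q, ((List.ofFn u).foldl (mcStep P) π) q' * P b q' q := by
      intro b u
      rw [List.ofFn_succ', List.concat_eq_append, List.foldl_append]
      simp [mcStep]
    simp only [h]
    have h2 : ∀ b : Bool, ∑ u : Fin ℓ → Bool,
        ∑ q' : Q, ((List.ofFn u).foldl (mcStep P) π) q' * P b q' q
          = ∑ q' : Q, π q' * P b q' q := by
      intro b
      rw [Finset.sum_comm]
      simp only [← Finset.sum_mul, ih]
    simp only [h2, Fintype.sum_bool]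
    rw [← Finset.sum_add_distrib]
    conv_rhs => rw [← hstat q]
    exact Finset.sum_congr rfl fun i _ => by ring

theorem markov_bound {Q : Type*} [Fintype Q] (P : Bool → Q → Q → ℝ) (π : Q → ℝ)
    (hP : ∀ b i j, 0 ≤ P b i j) (hπ0 : ∀ i, 0 ≤ π i)
    (hstat : ∀ j, ∑ i : Q, π i * (P false i j + P true i j) = π j) (ℓ : ℕ)
    (f : (Fin ℓ → Bool) → Bool) :
    ∑ i : Q, π i * min (∑ j : Q, P false i j) (∑ j : Q, P true i j)
      ≤ ∑ u : Fin ℓ → Bool, mcMeasure π P (List.ofFn u ++ [!f u]) := by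
  calc ∑ i : Q, π i * min (∑ j : Q, P false i j) (∑ j : Q, P true i j)
      = ∑ i : Q, ∑ u : Fin ℓ → Bool, ((List.ofFn u).foldl (mcStep P) π) i *
          min (∑ j : Q, P false i j) (∑ j : Q, P true i j) := by
        simp only [← Finset.sum_mul, sum_foldl P π hstat]
    _ = ∑ u : Fin ℓ → Bool, ∑ i : Q, ((List.ofFn u).foldl (mcStep P) π) i *
          min (∑ j : Q, P false i j) (∑ j : Q, P true i j) := Finset.sum_comm
    _ ≤ _ := by
        refine Finset.sum_le_sum fun u _ => ?_
        unfold mcMeasure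
        rw [List.foldl_append]
        simp only [List.foldl_cons, List.foldl_nil]
        unfold mcStep
        rw [Finset.sum_comm]
        refine Finset.sum_le_sum fun i _ => ?_
        rw [← Finset.mul_sum]
        refine mul_le_mul_of_nonneg_left ?_ (foldl_nonneg P hP _ _ hπ0 i)
        cases f u
        · exact min_le_right _ _
        · exact min_le_left _ _

theorem gammaWord_nonneg (ℓ : ℕ) (x : ℕ → Bool) (n : ℕ) (hn : ℓ < n) :
    0 ≤ gammaWord ℓ x n := by
  have h : (ℓ : ℝ) < n := by exact_mod_cast hn
  unfold gammaWord
  refine mul_nonneg (one_div_nonneg.mpr (by linarith)) ?_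
  exact Finset.le_inf' _ _ fun f _ => Nat.cast_nonneg _

theorem gammaWord_le_one (ℓ : ℕ) (x : ℕ → Bool) (n : ℕ) (hn : ℓ < n) :
    gammaWord ℓ x n ≤ 1 := by
  have h : (ℓ : ℝ) < n := by exact_mod_cast hn
  unfold gammaWord
  rw [one_div, inv_mul_le_iff₀ (by linarith), mul_one]
  refine (Finset.inf'_le _ (Finset.mem_univ (fun _ => true))).trans ?_
  have h1 := Finset.card_filter_le (Finset.Ico ℓ n)
    (fun i => x i ≠ (fun _ : Fin ℓ → Bool => true) (fun j => x (i - ℓ + j)))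
  rw [Nat.card_Ico] at h1
  rw [← Nat.cast_sub hn.le]
  exact_mod_cast h1

theorem le_gammaWord (ℓ : ℕ) (x : ℕ → Bool) (n : ℕ) (hn : ℓ < n) (a : ℝ)
    (h : ∀ f : (Fin ℓ → Bool) → Bool,
      a ≤ ∑ u : Fin ℓ → Bool, (occ x n (List.ofFn u ++ [!f u]) : ℝ) / n) :
    a ≤ gammaWord ℓ x n := by
  have hln : (ℓ : ℝ) < n := by exact_mod_cast hn
  have hl0 : (0 : ℝ) ≤ ℓ := Nat.cast_nonneg _
  unfold gammaWord
  obtain ⟨f, -, hf⟩ := Finset.exists_mem_eq_inf' (Finset.univ_nonempty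
    (α := (Fin ℓ → Bool) → Bool)) (fun f => ((((Finset.Ico ℓ n).filter
        (fun i => x i ≠ f (fun j => x (i - ℓ + j)))).card : ℝ)))
  rw [hf, errors_eq]
  refine (h f).trans ?_
  rw [← Finset.sum_div, one_div, inv_mul_eq_div]
  push_cast
  refine div_le_div_of_nonneg_left (Finset.sum_nonneg fun _ _ => Nat.cast_nonneg _) ?_ ?_
  · linarith
  · linarith

theorem liminf_gammaWord_le (ℓ : ℕ) (x : ℕ → Bool) :
    (atTop.liminf fun n => gammaWord ℓ x n) ≤ 1 := by
  refine liminf_le_of_frequently_le ?_ ?_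
  · exact Eventually.frequently
      ((eventually_gt_atTop ℓ).mono fun n hn => gammaWord_le_one ℓ x n hn)
  · exact isBoundedUnder_of_eventually_ge
      ((eventually_gt_atTop ℓ).mono fun n hn => gammaWord_nonneg ℓ x n hn)

theorem gammaLow_ge_of_generic_markov {Q : Type*} [Fintype Q]
    (P0 P1 : Q → Q → ℝ)
    (hP0 : ∀ i j, 0 ≤ P0 i j) (hP1 : ∀ i j, 0 ≤ P1 i j)
    (hrow : ∀ i, ∑ j : Q, (P0 i j + P1 i j) = 1)
    (π : Q → ℝ) (hπ0 : ∀ i, 0 ≤ π i) (hπ1 : ∑ i : Q, π i = 1)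
    (hstat : ∀ j, ∑ i : Q, π i * (P0 i j + P1 i j) = π j)
    (x : ℕ → Bool)
    (hgen : ∀ u : List Bool,
      Filter.Tendsto (fun n => (occ x n u : ℝ) / n) atTop
        (nhds (mcMeasure π (fun b => bif b then P1 else P0) u))) :
    ∑ i : Q, π i * min (∑ j : Q, P0 i j) (∑ j : Q, P1 i j) ≤ gammaLow x := by
  set P : Bool → Q → Q → ℝ := fun b => bif b then P1 else P0 with hPdef
  have hP : ∀ b i j, 0 ≤ P b i j := by
    intro b i j
    cases b
    · exact hP0 i j
    · exact hP1 i j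
  have key : ∀ ℓ : ℕ, ∑ i : Q, π i * min (∑ j : Q, P0 i j) (∑ j : Q, P1 i j)
      ≤ atTop.liminf fun n => gammaWord ℓ x n := by
    intro ℓ
    refine le_of_forall_pos_le_add fun ε hε => ?_
    rw [← sub_le_iff_le_add]
    refine le_liminf_of_le ?_ ?_
    · exact IsBoundedUnder.isCoboundedUnder_ge (isBoundedUnder_of_eventually_le
        ((eventually_gt_atTop ℓ).mono fun n hn => gammaWord_le_one ℓ x n hn))
    · have hall : ∀ᶠ n : ℕ in atTop, ∀ f : (Fin ℓ → Bool) → Bool,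
          ∑ i : Q, π i * min (∑ j : Q, P0 i j) (∑ j : Q, P1 i j) - ε
            ≤ ∑ u : Fin ℓ → Bool, (occ x n (List.ofFn u ++ [!f u]) : ℝ) / n := by
        rw [eventually_all]
        intro f
        have ht := tendsto_finsetSum (Finset.univ : Finset (Fin ℓ → Bool))
          fun u _ => hgen (List.ofFn u ++ [!f u])
        have hb := markov_bound P π hP hπ0 hstat ℓ f
        change ∑ i : Q, π i * min (∑ j : Q, P0 i j) (∑ j : Q, P1 i j) ≤ _ at hb
        exact (ht.eventually (lt_mem_nhds
          (lt_of_lt_of_le (sub_lt_self _ hε) hb))).mono fun n hn => hn.le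
      filter_upwards [hall, eventually_gt_atTop ℓ] with n hn hl
      exact le_gammaWord ℓ x n hl _ hn
  unfold gammaLow
  refine le_liminf_of_le ?_ (Eventually.of_forall key)
  exact IsBoundedUnder.isCoboundedUnder_ge (isBoundedUnder_of_eventually_le
    (Eventually.of_forall fun ℓ => liminf_gammaWord_le ℓ x))
end

section
/- Let ℓ ≥ 1 and let x ∈ B^ℕ be such that for every word u ∈ B^{ℓ+1} the frequency α_u := lim_{n→∞} occ(x[0:n), u)/n exists. Then lim_{n→∞} β_ℓ(x[0:n)) exists and equals Σ_{v ∈ B^ℓ} min(α_{0v}, α_{1v}), and lim_{n→∞} γ_ℓ(x[0:n)) exists and equals Σ_{v ∈ B^ℓ} min(α_{v0}, α_{v1}), where 0v, 1v, v0, v1 denote the words obtained by prepending respectively appending the symbol to v. -/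
open Filter Topology

/-- The minimal number of prediction errors splits over contexts. -/
theorem inf_errors_eq {W : Type*} [Fintype W] [DecidableEq W] (s : Finset ℕ)
    (g : ℕ → W) (b : ℕ → Bool) (h : (Finset.univ : Finset (W → Bool)).Nonempty) :
    (Finset.univ : Finset (W → Bool)).inf' h
      (fun f => (((s.filter (fun i => b i ≠ f (g i))).card : ℝ))) =
    ∑ v : W, min (((s.filter (fun i => b i = false ∧ g i = v)).card : ℝ))
      (((s.filter (fun i => b i = true ∧ g i = v)).card : ℝ)) := by
  have key : ∀ f : W → Bool, (((s.filter (fun i => b i ≠ f (g i))).card : ℝ)) =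
      ∑ v : W, (((s.filter (fun i => b i = (!f v) ∧ g i = v)).card : ℝ)) := by
    intro f
    rw [Finset.card_eq_sum_card_fiberwise (f := g) (t := Finset.univ) (by intro i _; simp)]
    push_cast
    refine Finset.sum_congr rfl fun v _ => ?_
    congr 2
    ext i
    simp only [Finset.mem_filter]
    constructor
    · rintro ⟨⟨h1, h2⟩, h3⟩
      subst h3
      refine ⟨h1, ?_, rfl⟩
      cases hb : b i <;> cases hf : f (g i) <;> simp_all
    · rintro ⟨h1, h2, h3⟩
      subst h3
      refine ⟨⟨h1, ?_⟩, rfl⟩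
      rw [h2]
      cases f (g i) <;> simp
  apply le_antisymm
  · let f : W → Bool := fun v => decide (((s.filter (fun i => b i = false ∧ g i = v)).card : ℝ) ≤
      ((s.filter (fun i => b i = true ∧ g i = v)).card : ℝ))
    refine (Finset.inf'_le _ (Finset.mem_univ f)).trans ?_
    rw [key f]
    refine Finset.sum_le_sum fun v _ => ?_
    by_cases hle : ((s.filter (fun i => b i = false ∧ g i = v)).card : ℝ) ≤
      ((s.filter (fun i => b i = true ∧ g i = v)).card : ℝ)
    · have hf : f v = true := decide_eq_true hle
      rw [min_eq_left hle, hf]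
      simp
    · have hf : f v = false := decide_eq_false hle
      rw [min_eq_right (le_of_not_ge hle), hf]
      simp
  · refine Finset.le_inf' _ _ fun f _ => ?_
    rw [key f]
    refine Finset.sum_le_sum fun v _ => ?_
    cases f v
    · exact min_le_right _ _
    · exact min_le_left _ _

theorem occ_ofFn (ℓ : ℕ) (x : ℕ → Bool) (n : ℕ) (u : Fin (ℓ + 1) → Bool) :
    occ x n (List.ofFn u) =
      ((Finset.range (n - ℓ)).filter (fun i => ∀ j : Fin (ℓ + 1), x (i + j) = u j)).card := by
  unfold occ factor
  have h0 : (List.ofFn u).length = ℓ + 1 := List.length_ofFn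
  rw [h0, Nat.add_sub_add_right]
  congr 1
  ext i
  simp only [Finset.mem_filter, List.ofFn_inj, funext_iff]

theorem occ_cons (ℓ : ℕ) (x : ℕ → Bool) (n : ℕ) (a : Bool) (v : Fin ℓ → Bool) :
    occ x n (List.ofFn (Fin.cons a v : Fin (ℓ + 1) → Bool)) =
      ((Finset.range (n - ℓ)).filter
        (fun i => x i = a ∧ (fun j : Fin ℓ => x (i + 1 + j)) = v)).card := by
  rw [occ_ofFn]
  congr 1
  ext i
  simp only [Finset.mem_filter, Fin.forall_fin_succ, Fin.cons_zero, Fin.cons_succ,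
    funext_iff, Fin.val_zero, Fin.val_succ, add_zero]
  simp only [add_assoc, add_comm, add_left_comm]

theorem occ_snoc (ℓ : ℕ) (x : ℕ → Bool) (n : ℕ) (a : Bool) (v : Fin ℓ → Bool) :
    occ x n (List.ofFn (Fin.snoc v a : Fin (ℓ + 1) → Bool)) =
      ((Finset.Ico ℓ n).filter
        (fun i => x i = a ∧ (fun j : Fin ℓ => x (i - ℓ + j)) = v)).card := by
  rw [occ_ofFn]
  refine Finset.card_bij (fun i _ => i + ℓ) ?_ ?_ ?_
  · intro i hi
    simp only [Finset.mem_filter, Finset.mem_range, Fin.forall_fin_succ', Fin.snoc_castSucc,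
      Fin.snoc_last, Fin.val_castSucc, Fin.val_last] at hi
    simp only [Finset.mem_filter, Finset.mem_Ico, funext_iff, Nat.add_sub_cancel]
    exact ⟨by omega, hi.2.2, hi.2.1⟩
  · intro i _ j _ hij
    omega
  · intro k hk
    simp only [Finset.mem_filter, Finset.mem_Ico, funext_iff] at hk
    refine ⟨k - ℓ, ?_, by omega⟩
    simp only [Finset.mem_filter, Finset.mem_range, Fin.forall_fin_succ', Fin.snoc_castSucc,
      Fin.snoc_last, Fin.val_castSucc, Fin.val_last]
    refine ⟨by omega, hk.2.2, ?_⟩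
    rw [Nat.sub_add_cancel hk.1.1]
    exact hk.2.1

theorem tendsto_sum_min {W : Type*} [Fintype W] (ℓ : ℕ) (c d : W → ℕ → ℝ) (p q : W → ℝ)
    (hc : ∀ v, Tendsto (fun n : ℕ => c v n / n) atTop (𝓝 (p v)))
    (hd : ∀ v, Tendsto (fun n : ℕ => d v n / n) atTop (𝓝 (q v))) :
    Tendsto (fun n : ℕ => (1 / ((n : ℝ) - ℓ)) * ∑ v, min (c v n) (d v n)) atTop
      (𝓝 (∑ v, min (p v) (q v))) := by
  have h1 : Tendsto (fun n : ℕ => ∑ v, min (c v n / n) (d v n / n)) atTop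
      (𝓝 (∑ v, min (p v) (q v))) :=
    tendsto_finsetSum _ fun v _ => (hc v).min (hd v)
  have h2 : Tendsto (fun n : ℕ => (1 - (ℓ : ℝ) / n)⁻¹) atTop (𝓝 1) := by
    have := (tendsto_const_nhds (x := (1 : ℝ))).sub (tendsto_const_div_atTop_nhds_zero_nat (ℓ : ℝ))
    simpa using this.inv₀ (by simp)
  have h3 := h2.mul h1
  rw [one_mul] at h3
  refine h3.congr' ?_
  filter_upwards [eventually_gt_atTop ℓ] with n hn
  have hn0 : (0 : ℝ) < n := by exact_mod_cast (Nat.zero_le ℓ).trans_lt hn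
  have hnl : (0 : ℝ) < (n : ℝ) - ℓ := by
    have : (ℓ : ℝ) < n := by exact_mod_cast hn
    linarith
  have h4 : ∑ v, min (c v n / n) (d v n / n) = (∑ v, min (c v n) (d v n)) / n := by
    rw [Finset.sum_div]
    exact Finset.sum_congr rfl fun v _ => min_div_div_right hn0.le _ _
  have h5 : 1 - (ℓ : ℝ) / n = ((n : ℝ) - ℓ) / n := by field_simp
  rw [h4, h5]
  field_simp

theorem tendsto_beta_gamma_of_freq (ℓ : ℕ) (hℓ : 1 ≤ ℓ) (x : ℕ → Bool)
    (α : (Fin (ℓ + 1) → Bool) → ℝ)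
    (hα : ∀ u : Fin (ℓ + 1) → Bool,
      Filter.Tendsto (fun n => (occ x n (List.ofFn u) : ℝ) / n) atTop (nhds (α u))) :
    Filter.Tendsto (fun n => betaWord ℓ x n) atTop
      (nhds (∑ v : Fin ℓ → Bool, min (α (Fin.cons false v)) (α (Fin.cons true v)))) ∧
    Filter.Tendsto (fun n => gammaWord ℓ x n) atTop
      (nhds (∑ v : Fin ℓ → Bool, min (α (Fin.snoc v false)) (α (Fin.snoc v true)))) := by
  constructor
  · refine (tendsto_sum_min ℓ _ _ _ _ (fun v => hα (Fin.cons false v))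
      (fun v => hα (Fin.cons true v))).congr fun n => ?_
    unfold betaWord
    rw [inf_errors_eq (Finset.range (n - ℓ)) (fun i (j : Fin ℓ) => x (i + 1 + j)) x]
    simp only [occ_cons]
  · refine (tendsto_sum_min ℓ _ _ _ _ (fun v => hα (Fin.snoc v false))
      (fun v => hα (Fin.snoc v true))).congr fun n => ?_
    unfold gammaWord
    rw [inf_errors_eq (Finset.Ico ℓ n) (fun i (j : Fin ℓ) => x (i - ℓ + j)) x]
    simp only [occ_snoc]
end

section
/- For every x ∈ B^ℕ and all integers n > ℓ ≥ 1, 2·γ_ℓ(x[0:n)) ≤ Hc^{n,ℓ}(x) ≤ H(γ_ℓ(x[0:n))). -/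
open Filter Topology

/-- The count of positions with context `u` followed by `a`. -/
def cnt (x : ℕ → Bool) (ℓ N : ℕ) (u : Fin ℓ → Bool) (a : Bool) : ℕ :=
  ((Finset.range N).filter (fun i => (fun j : Fin ℓ => x (i + j)) = u ∧ x (i + ℓ) = a)).card

lemma occ_append (x : ℕ → Bool) (ℓ n : ℕ) (u : Fin ℓ → Bool) (a : Bool) :
    occ x n (List.ofFn u ++ [a]) = cnt x ℓ (n - ℓ) u a := by
  unfold occ cnt factor
  have hl : (List.ofFn u ++ [a]).length = ℓ + 1 := by simp
  rw [hl, Nat.add_sub_add_right]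
  congr 1
  apply Finset.filter_congr
  intro i _
  rw [List.ofFn_succ_last]
  constructor
  · intro h
    have h' := List.append_inj' h (by simp)
    refine ⟨List.ofFn_injective h'.1, ?_⟩
    simpa using h'.2
  · rintro ⟨h, h'⟩
    rw [← h, ← h']
    simp

lemma occ_ctx (x : ℕ → Bool) (ℓ n : ℕ) (h : ℓ < n) (u : Fin ℓ → Bool) :
    occ x (n - 1) (List.ofFn u) = cnt x ℓ (n - ℓ) u true + cnt x ℓ (n - ℓ) u false := by
  unfold occ cnt factor
  have hl : (List.ofFn u).length = ℓ := by simp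
  rw [hl, show n - 1 + 1 - ℓ = n - ℓ by omega]
  rw [← Finset.card_union_of_disjoint]
  · congr 1
    ext i
    simp only [Finset.mem_filter, Finset.mem_union, List.ofFn_inj]
    cases x (i + ℓ) <;> simp
  · rw [Finset.disjoint_filter]
    rintro i _ ⟨_, h1⟩ ⟨_, h2⟩
    simp [h1] at h2

lemma sum_cnt (x : ℕ → Bool) (ℓ N : ℕ) :
    ∑ u, (cnt x ℓ N u true + cnt x ℓ N u false) = N := by
  have h := Finset.card_eq_sum_card_fiberwise (s := Finset.range N)
    (f := fun i => (fun j : Fin ℓ => x (i + j))) (t := Finset.univ) (by intro _ _; simp)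
  rw [Finset.card_range] at h
  conv_rhs => rw [h]
  refine Finset.sum_congr rfl fun u _ => ?_
  unfold cnt
  rw [← Finset.card_union_of_disjoint]
  · congr 1
    ext i
    simp only [Finset.mem_filter, Finset.mem_union]
    cases x (i + ℓ) <;> simp
  · rw [Finset.disjoint_filter]
    rintro i _ ⟨_, h1⟩ ⟨_, h2⟩
    simp [h1] at h2

lemma err_eq (x : ℕ → Bool) (ℓ n : ℕ) (h : ℓ < n) (f : (Fin ℓ → Bool) → Bool) :
    ((Finset.Ico ℓ n).filter (fun i => x i ≠ f (fun j => x (i - ℓ + j)))).card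
      = ∑ u, cnt x ℓ (n - ℓ) u (!f u) := by
  have e : ((Finset.Ico ℓ n).filter (fun i => x i ≠ f (fun j => x (i - ℓ + j)))).card
      = ((Finset.range (n - ℓ)).filter
        (fun i => x (i + ℓ) ≠ f (fun j => x (i + j)))).card := by
    symm
    apply Finset.card_bij (fun i _ => i + ℓ)
    · intro i hi
      simp only [Finset.mem_filter, Finset.mem_range, Finset.mem_Ico] at hi ⊢
      refine ⟨by omega, ?_⟩
      simpa using hi.2
    · intro a _ b _ hab
      omega
    · intro b hb
      simp only [Finset.mem_filter, Finset.mem_range, Finset.mem_Ico] at hb ⊢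
      refine ⟨b - ℓ, ⟨by omega, ?_⟩, by omega⟩
      rw [Nat.sub_add_cancel hb.1.1]
      exact hb.2
  rw [e, Finset.card_eq_sum_card_fiberwise
    (f := fun i => (fun j : Fin ℓ => x (i + j))) (t := Finset.univ) (by intro _ _; simp)]
  refine Finset.sum_congr rfl fun u _ => ?_
  unfold cnt
  congr 1
  ext i
  simp only [Finset.mem_filter]
  constructor
  · rintro ⟨⟨h1, h2⟩, h3⟩
    subst h3
    refine ⟨h1, rfl, ?_⟩
    revert h2
    cases x (i + ℓ) <;> cases f (fun j => x (i + j)) <;> simp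
  · rintro ⟨h1, h3, h2⟩
    subst h3
    refine ⟨⟨h1, ?_⟩, rfl⟩
    rw [h2]
    simp

lemma gammaWord_eq (x : ℕ → Bool) (ℓ n : ℕ) (h : ℓ < n) :
    gammaWord ℓ x n = (1 / ((n : ℝ) - ℓ)) *
      ∑ u, min (cnt x ℓ (n - ℓ) u true : ℝ) (cnt x ℓ (n - ℓ) u false) := by
  unfold gammaWord
  congr 1
  apply le_antisymm
  · refine (Finset.inf'_le _ (Finset.mem_univ
      (fun u => decide (cnt x ℓ (n - ℓ) u false ≤ cnt x ℓ (n - ℓ) u true)))).trans ?_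
    rw [err_eq x ℓ n h (fun u => decide (cnt x ℓ (n - ℓ) u false ≤ cnt x ℓ (n - ℓ) u true))]
    push_cast
    refine Finset.sum_le_sum fun u _ => ?_
    by_cases hc : cnt x ℓ (n - ℓ) u false ≤ cnt x ℓ (n - ℓ) u true
    · simp [hc]
    · simp [hc]
      omega
  · apply Finset.le_inf'
    intro f _
    rw [err_eq x ℓ n h]
    push_cast
    refine Finset.sum_le_sum fun u _ => ?_
    cases f u <;> simp

/-- One context's contribution. -/
lemma term_eq (a b N : ℝ) (ha : 0 ≤ a) (hb : 0 ≤ b) (hN : 0 < N) :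
    -((if 0 < a / N then a / N * Real.logb 2 ((a / N) / ((a + b) / N)) else 0)
     + (if 0 < b / N then b / N * Real.logb 2 ((b / N) / ((a + b) / N)) else 0))
     = ((a + b) / N) * (Real.binEntropy (min a b / (a + b)) / Real.log 2) := by
  have e : ∀ c : ℝ, 0 ≤ c → (if 0 < c / N then c / N * Real.logb 2 ((c / N) / ((a + b) / N)) else 0)
      = c / N * (Real.log (c / (a + b)) / Real.log 2) := by
    intro c hc
    rcases hc.eq_or_lt with h | h
    · simp [← h]
    · rw [if_pos (by positivity), div_div_div_cancel_right₀ hN.ne', Real.logb]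
  rw [e a ha, e b hb]
  rcases (add_nonneg ha hb).eq_or_lt with h0 | h0
  · have ea : a = 0 := by linarith
    have eb : b = 0 := by linarith
    simp [ea, eb]
  have key : Real.binEntropy (min a b / (a + b)) = Real.binEntropy (a / (a + b)) := by
    rcases le_total a b with h | h
    · rw [min_eq_left h]
    · rw [min_eq_right h, ← Real.binEntropy_one_sub]
      congr 1
      field_simp
      ring
  rw [key, Real.binEntropy_eq_negMulLog_add_negMulLog_one_sub,
    show 1 - a / (a + b) = b / (a + b) by field_simp; ring]
  unfold Real.negMulLog
  have := h0.ne'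
  field_simp
  ring

lemma binEnt_lower (p : ℝ) (h0 : 0 ≤ p) (h1 : p ≤ 1 / 2) :
    2 * p ≤ Real.binEntropy p / Real.log 2 := by
  have hl : 0 < Real.log 2 := Real.log_pos (by norm_num)
  rw [le_div_iff₀ hl]
  have := Real.strictConcave_binEntropy.concaveOn.2
    (show (0 : ℝ) ∈ Set.Icc (0 : ℝ) 1 by simp)
    (show (2⁻¹ : ℝ) ∈ Set.Icc (0 : ℝ) 1 by constructor <;> norm_num)
    (show 0 ≤ 1 - 2 * p by linarith) (show 0 ≤ 2 * p by linarith) (by ring)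
  simp only [smul_eq_mul, Real.binEntropy_zero, Real.binEntropy_two_inv] at this
  have e : (1 - 2 * p) * 0 + 2 * p * 2⁻¹ = p := by ring
  rw [e] at this
  linarith

lemma binEntropy_eq_div (p : ℝ) : binEntropy p = Real.binEntropy p / Real.log 2 := by
  rw [Real.binEntropy_eq_negMulLog_add_negMulLog_one_sub]
  unfold binEntropy Real.negMulLog Real.logb
  ring

theorem condEntropy_bounds (x : ℕ → Bool) (ℓ n : ℕ) (h1 : 1 ≤ ℓ) (h2 : ℓ < n) :
    2 * gammaWord ℓ x n ≤ condEntropy ℓ x n ∧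
    condEntropy ℓ x n ≤ binEntropy (gammaWord ℓ x n) := by
  have hN : (0 : ℝ) < (n : ℝ) - ℓ := by
    have : (ℓ : ℝ) < n := by exact_mod_cast h2
    linarith
  set N : ℝ := (n : ℝ) - ℓ with hNdef
  set A : (Fin ℓ → Bool) → ℝ := fun u => (cnt x ℓ (n - ℓ) u true : ℝ) with hA
  set B : (Fin ℓ → Bool) → ℝ := fun u => (cnt x ℓ (n - ℓ) u false : ℝ) with hB
  have hA0 : ∀ u, 0 ≤ A u := fun u => Nat.cast_nonneg _
  have hB0 : ∀ u, 0 ≤ B u := fun u => Nat.cast_nonneg _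
  have hc : condEntropy ℓ x n = ∑ u, ((A u + B u) / N) *
      (Real.binEntropy (min (A u) (B u) / (A u + B u)) / Real.log 2) := by
    unfold condEntropy
    rw [← Finset.sum_neg_distrib]
    refine Finset.sum_congr rfl fun u _ => ?_
    rw [← term_eq (A u) (B u) N (hA0 u) (hB0 u) hN, Fintype.sum_bool, occ_append, occ_append,
      occ_ctx x ℓ n h2]
    push_cast
    rfl
  have hmul : ∀ u, ((A u + B u) / N) * (min (A u) (B u) / (A u + B u))
      = (1 / N) * min (A u) (B u) := by
    intro u
    have hA' := hA0 u
    have hB' := hB0 u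
    rcases (add_nonneg hA' hB').eq_or_lt with h | h
    · have ea : A u = 0 := by linarith
      have eb : B u = 0 := by linarith
      simp [ea, eb]
    · field_simp
  have hg : gammaWord ℓ x n = ∑ u, ((A u + B u) / N) * (min (A u) (B u) / (A u + B u)) := by
    rw [gammaWord_eq x ℓ n h2, Finset.mul_sum]
    exact Finset.sum_congr rfl fun u _ => (hmul u).symm
  have hw0 : ∀ u, 0 ≤ (A u + B u) / N := fun u =>
    div_nonneg (add_nonneg (hA0 u) (hB0 u)) hN.le
  have hw1 : ∑ u, (A u + B u) / N = 1 := by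
    rw [← Finset.sum_div, div_eq_one_iff_eq hN.ne']
    have := sum_cnt x ℓ (n - ℓ)
    have h' : ((∑ u, (cnt x ℓ (n - ℓ) u true + cnt x ℓ (n - ℓ) u false) : ℕ) : ℝ)
      = ((n - ℓ : ℕ) : ℝ) := by rw [this]
    rw [Nat.cast_sub h2.le] at h'
    push_cast at h'
    exact h'
  have hp0 : ∀ u, 0 ≤ min (A u) (B u) / (A u + B u) := fun u =>
    div_nonneg (le_min (hA0 u) (hB0 u)) (add_nonneg (hA0 u) (hB0 u))
  have hp1 : ∀ u, min (A u) (B u) / (A u + B u) ≤ 1 / 2 := by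
    intro u
    apply div_le_of_le_mul₀ (add_nonneg (hA0 u) (hB0 u)) (by norm_num)
    have := min_le_left (A u) (B u)
    have := min_le_right (A u) (B u)
    linarith
  constructor
  · rw [hg, hc, Finset.mul_sum]
    refine Finset.sum_le_sum fun u _ => ?_
    have := mul_le_mul_of_nonneg_left (binEnt_lower _ (hp0 u) (hp1 u)) (hw0 u)
    linarith
  · rw [binEntropy_eq_div, hg, hc]
    have := Real.strictConcave_binEntropy.concaveOn.le_map_sum (t := Finset.univ)
      (w := fun u => (A u + B u) / N) (p := fun u => min (A u) (B u) / (A u + B u))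
      (fun u _ => hw0 u) hw1 (fun u _ => ⟨hp0 u, (hp1 u).trans (by norm_num)⟩)
    simp only [smul_eq_mul] at this
    have hl : 0 < Real.log 2 := Real.log_pos (by norm_num)
    simp only [← mul_div_assoc]
    rw [← Finset.sum_div]
    simp only [← mul_div_assoc] at this
    exact div_le_div_of_nonneg_right this hl.le
end
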